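/- The satisfiability problem for the intersection of the fluted fragment with the two-variable guarded fragment is undecidable in the presence of three distinguished transitive relations; the same problem is undecidable when the three distinguished relations are instead required to be equivalence relations. -/

import Mathlib

/- STATEMENT 15: Satisfiability of sentences in the intersection of the fluted
fragment and the two-variable guarded fragment is undecidable with three transitive
relations, and likewise with three equivalence relations. -/

namespace FlutedThreeTrans

/-- FL² formulas over countably many unary predicates (indexed by `ℕ`) and three
distinguished binary predicates (indexed by `Fin 3`); the index `m ≤ 2` records that
the free variables form a suffix of `x₁, …, x_m`, all atoms ending at the last
variable, and only the last variable may be quantified. -/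
inductive F : ℕ → Type
  | patom (p : ℕ) {m : ℕ} (h1 : 1 ≤ m) (h2 : m ≤ 2) : F m
  | batom (k : Fin 3) : F 2
  | fls {m : ℕ} (h : m ≤ 2) : F m
  | not {m : ℕ} (φ : F m) : F m
  | and {m : ℕ} (φ ψ : F m) : F m
  | or {m : ℕ} (φ ψ : F m) : F m
  | imp {m : ℕ} (φ ψ : F m) : F m
  | ex {m : ℕ} (h : m ≤ 1) (φ : F (m + 1)) : F m
  | all {m : ℕ} (h : m ≤ 1) (φ : F (m + 1)) : F m

/-- A structure interpreting the unary predicates and the three distinguished binary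
predicates. -/
structure Str (A : Type) where
  U : ℕ → A → Prop
  T : Fin 3 → A → A → Prop

def Sat {A : Type} (M : Str A) : ∀ {m : ℕ}, F m → (Fin m → A) → Prop
  | m, .patom p h1 _, v => M.U p (v ⟨m - 1, by omega⟩)
  | _, .batom k, v => M.T k (v 0) (v 1)
  | _, .fls _, _ => False
  | _, .not φ, v => ¬ Sat M φ v
  | _, .and φ ψ, v => Sat M φ v ∧ Sat M ψ v
  | _, .or φ ψ, v => Sat M φ v ∨ Sat M ψ v
  | _, .imp φ ψ, v => Sat M φ v → Sat M ψ v
  | _, .ex _ φ, v => ∃ a : A, Sat M φ (Fin.snoc v a)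
  | _, .all _ φ, v => ∀ a : A, Sat M φ (Fin.snoc v a)

/-- `φ` has a model in which all three distinguished binary relations are
transitive. -/
def Satisfiable (φ : F 0) : Prop :=
  ∃ (A : Type) (_ : Nonempty A) (M : Str A),
    (∀ k, Transitive (M.T k)) ∧ Sat M φ (fun i => i.elim0)

/-- A concrete Gödel numbering of FL²3T-formulas. -/
def encode : ∀ {m : ℕ}, F m → ℕ
  | _, .patom p _ _ => Nat.pair 0 p
  | _, .batom k => Nat.pair 1 k.val
  | _, .fls _ => Nat.pair 2 0
  | _, .not φ => Nat.pair 3 (encode φ)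
  | _, .and φ ψ => Nat.pair 4 (Nat.pair (encode φ) (encode ψ))
  | _, .or φ ψ => Nat.pair 5 (Nat.pair (encode φ) (encode ψ))
  | _, .imp φ ψ => Nat.pair 6 (Nat.pair (encode φ) (encode ψ))
  | _, .ex _ φ => Nat.pair 7 (encode φ)
  | _, .all _ φ => Nat.pair 8 (encode φ)


/-- The variable `x₁` occurs (free) in a formula with free variables among
`x₁, x₂`.  (Formulas of index 2 are quantifier-free.) -/
def UsesVar1 : F 2 → Prop
  | .batom _ => True
  | .not φ => UsesVar1 φ
  | .and φ ψ => UsesVar1 φ ∨ UsesVar1 ψ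
  | .or φ ψ => UsesVar1 φ ∨ UsesVar1 ψ
  | .imp φ ψ => UsesVar1 φ ∨ UsesVar1 ψ
  | _ => False

/-- Atomic formulas with free variable `x₁`. -/
def IsAtom1 (φ : F 1) : Prop :=
  ∃ p h1 h2, φ = F.patom p h1 h2

/-- Atomic formulas with free variables among `x₁, x₂`. -/
def IsAtom2 (φ : F 2) : Prop :=
  (∃ p h1 h2, φ = F.patom p h1 h2) ∨ ∃ k, φ = F.batom k

/-- Atomic formulas featuring the variable `x₁` (binary atoms). -/
def IsBatom (φ : F 2) : Prop :=
  ∃ k, φ = F.batom k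

/-- Membership in the guarded fragment GF²: all quantification is of the form
`∃x₂(α ∧ ψ)` or `∀x₂(α → ψ)` (resp. `∃x₁(α ∧ ψ)`, `∀x₁(α → ψ)`) where `α` is an atom
featuring all free variables of `ψ` (in particular the quantified variable). -/
inductive Guarded : ∀ {m : ℕ}, F m → Prop
  | patom {m : ℕ} (p : ℕ) (h1 : 1 ≤ m) (h2 : m ≤ 2) : Guarded (F.patom p h1 h2)
  | batom (k : Fin 3) : Guarded (F.batom k)
  | fls {m : ℕ} (h : m ≤ 2) : Guarded (F.fls h)
  | not {m : ℕ} {φ : F m} : Guarded φ → Guarded (F.not φ)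
  | and {m : ℕ} {φ ψ : F m} : Guarded φ → Guarded ψ → Guarded (F.and φ ψ)
  | or {m : ℕ} {φ ψ : F m} : Guarded φ → Guarded ψ → Guarded (F.or φ ψ)
  | imp {m : ℕ} {φ ψ : F m} : Guarded φ → Guarded ψ → Guarded (F.imp φ ψ)
  | ex0 {h : 0 ≤ 1} {α χ : F 1} : IsAtom1 α → Guarded χ →
      Guarded (F.ex h (F.and α χ))
  | all0 {h : 0 ≤ 1} {α χ : F 1} : IsAtom1 α → Guarded χ →
      Guarded (F.all h (F.imp α χ))
  | ex1 {h : 1 ≤ 1} {α χ : F 2} : IsAtom2 α → Guarded χ →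
      (UsesVar1 χ → IsBatom α) → Guarded (F.ex h (F.and α χ))
  | all1 {h : 1 ≤ 1} {α χ : F 2} : IsAtom2 α → Guarded χ →
      (UsesVar1 χ → IsBatom α) → Guarded (F.all h (F.imp α χ))

/-- `φ` has a model in which the three distinguished binary relations are equivalence
relations. -/
def SatisfiableEquiv (φ : F 0) : Prop :=
  ∃ (A : Type) (_ : Nonempty A) (M : Str A),
    (∀ k, Equivalence (M.T k)) ∧ Sat M φ (fun i => i.elim0)

section helpers
open Turing

lemma trNat_two_pow (n : ℕ) : PartrecToTM2.trNat (2^n) =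
    List.replicate n PartrecToTM2.Γ'.bit0 ++ [PartrecToTM2.Γ'.bit1] := by
  have h : ∀ n : ℕ, ∃ p : PosNum, ((2^n : ℕ) : Num) = Num.pos p ∧ PartrecToTM2.trPosNum p =
    List.replicate n PartrecToTM2.Γ'.bit0 ++ [PartrecToTM2.Γ'.bit1] := by
    intro n
    induction n with
    | zero => exact ⟨PosNum.one, by simp; rfl, rfl⟩
    | succ n ih =>
      obtain ⟨p, h1, h2⟩ := ih
      refine ⟨p.bit0, ?_, ?_⟩
      · have : ((2 ^ (n+1) : ℕ) : Num) = ((2^n : ℕ) : Num) + ((2^n : ℕ) : Num) := by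
          rw [pow_succ, mul_two]; push_cast; rfl
        rw [this, h1]
        have := Num.bit0_of_bit0 (Num.pos p)
        rw [this]; rfl
      · simp [PartrecToTM2.trPosNum, h2, List.replicate_succ]
  obtain ⟨p, h1, h2⟩ := h n
  unfold PartrecToTM2.trNat
  rw [h1]; exact h2

lemma exists_code_log : ∃ c : ToPartrec.Code, ∀ n : ℕ,
    ((c.eval [2^n]).Dom ↔ (Nat.Partrec.Code.eval (Denumerable.ofNat Nat.Partrec.Code n) 0).Dom) := by
  have hf : Partrec (fun m : ℕ => (Nat.rfind (fun k => Part.some (decide (2^k = m)))).bind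
      (fun k => Nat.Partrec.Code.eval (Denumerable.ofNat Nat.Partrec.Code k) 0)) := by
    refine Partrec.bind (Partrec.rfind ?_) ?_
    · apply Computable₂.partrec₂
      have : Primrec₂ (fun (m k : ℕ) => decide (2^k = m)) := by
        have hp : Primrec (fun k : ℕ => 2^k) := by
          have := Primrec.nat_rec₁ (f := fun _ x => 2 * x) 1
            (Primrec.nat_mul.comp (Primrec.const 2) (Primrec.snd)).to₂
          refine this.of_eq fun n => ?_
          induction n with
          | zero => rfl
          | succ n ih => simp only [] at *; rw [ih, pow_succ]; ring
        exact (Primrec.eq.comp (hp.comp Primrec.snd) Primrec.fst).decide.to₂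
      exact this.to_comp
    · exact (Nat.Partrec.Code.eval_part.comp ((Computable.ofNat _).comp Computable.snd)
        (Computable.const 0)).to₂
  have hf' := Nat.Partrec'.part_iff₁.2 hf
  obtain ⟨c, hc⟩ := ToPartrec.Code.exists_code hf'
  refine ⟨c, fun n => ?_⟩
  have := hc (List.Vector.cons (2^n) List.Vector.nil)
  have h2 : (List.Vector.cons (2^n) List.Vector.nil).1 = [2^n] := rfl
  rw [h2] at this
  rw [this]
  have hr : (Nat.rfind (fun k => Part.some (decide (2^k = 2^n)))) = Part.some n := by
    apply Part.eq_some_iff.2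
    refine Nat.mem_rfind.2 ⟨by simp, ?_⟩
    intro m hm
    have : m ≠ n := hm.ne
    simpa using this
  simp only [List.Vector.head_cons, hr, Part.bind_some]
  simp [Part.map_eq_map]

instance : Fintype PartrecToTM2.K' :=
  ⟨{.main, .rev, .aux, .stack}, by intro x; cases x <;> simp⟩

theorem source : ∃ (Γ Q : Type) (_ : Fintype Γ) (_ : Inhabited Γ) (_ : Fintype Q)
    (_ : Inhabited Q) (M : TM0.Machine Γ Q) (p0 p1 s : Γ),
    ¬ ComputablePred (fun n : ℕ => (TM0.eval M (p0 :: p1 :: List.replicate n s)).Dom) := by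
  classical
  obtain ⟨c, hc⟩ := exists_code_log
  let i1 : Inhabited PartrecToTM2.Λ' := ⟨PartrecToTM2.trNormal c .halt⟩
  have s2 := PartrecToTM2.tr_supports c .halt
  have s1 := TM2to1.tr_supports PartrecToTM2.tr s2
  set M1 := TM2to1.tr PartrecToTM2.tr with hM1
  have s0 := TM1to0.tr_supports M1 s1
  set S := TM1to0.trStmts M1 (TM2to1.trSupp PartrecToTM2.tr (PartrecToTM2.codeSupp c .halt)) with hS
  set M0 := TM1to0.tr M1 with hM0
  let Q := {q // q ∈ S}
  let iQ : Inhabited Q := ⟨⟨default, s0.1⟩⟩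
  let upd : PartrecToTM2.Γ' → (∀ k : PartrecToTM2.K', Option PartrecToTM2.Γ') :=
    fun a => Function.update (fun _ => none) PartrecToTM2.K'.main (some a)
  let g1 : PointedMap (TM1to0.Λ' M1) Q := ⟨fun q => if h : q ∈ S then ⟨q, h⟩ else default, by
    have : default ∈ S := s0.1
    simp only [this, dite_true]; rfl⟩
  let idp : PointedMap (TM2to1.Γ' PartrecToTM2.K' (fun _ => PartrecToTM2.Γ')) (TM2to1.Γ' PartrecToTM2.K' (fun _ => PartrecToTM2.Γ')) := ⟨id, rfl⟩
  refine ⟨TM2to1.Γ' PartrecToTM2.K' (fun _ => PartrecToTM2.Γ'), Q, inferInstance, inferInstance,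
    inferInstance, iQ, M0.map idp idp g1 Subtype.val, (true, upd .cons), (false, upd .bit1),
      (false, upd .bit0), ?_⟩
  intro hcp
  apply ComputablePred.halting_problem 0
  have key : ∀ n, (TM0.eval (M0.map idp idp g1 Subtype.val) ((true, upd .cons) :: (false, upd .bit1) ::
      List.replicate n (false, upd .bit0))).Dom ↔
      (Nat.Partrec.Code.eval (Denumerable.ofNat Nat.Partrec.Code n) 0).Dom := by
    intro n
    rw [← hc n]
    set l : List (TM2to1.Γ' PartrecToTM2.K' (fun _ => PartrecToTM2.Γ')) := ((true, upd .cons) :: (false, upd .bit1) :: List.replicate n (false, upd .bit0)) with hl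
    have e1 : (TM0.eval (M0.map idp idp g1 Subtype.val) l).Dom ↔ (TM0.eval M0 l).Dom := by
      have hr := TM0.Machine.map_respects M0 idp idp g1 Subtype.val s0 (fun _ => rfl)
        (fun q hq => by
          have : q ∈ S := hq
          simp only [g1]
          change (if h : q ∈ S then (⟨q, h⟩ : Q) else default).1 = q
          simp [this])
      have := StateTransition.tr_eval_dom hr (a₁ := TM0.init l) (a₂ := TM0.init l) ⟨s0.1, by
        have := TM0.map_init idp g1 l
        rw [this]
        congr
        exact List.map_id l⟩
      exact this
    rw [e1, hM0, TM1to0.tr_eval]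
    have e2 := TM2to1.tr_eval_dom PartrecToTM2.tr PartrecToTM2.K'.main (PartrecToTM2.trList [2^n])
    have e3 : TM2to1.trInit PartrecToTM2.K'.main (PartrecToTM2.trList [2^n]) = l := by
      simp [TM2to1.trInit, PartrecToTM2.trList, trNat_two_pow, hl]
      change (true, upd .cons) :: (false, upd .bit1) :: List.map (fun a => (false, upd a))
        (List.replicate n PartrecToTM2.Γ'.bit0) = _
      rw [List.map_replicate]
      rfl
    rw [e3] at e2
    rw [e2]
    have e4 : (TM2.init PartrecToTM2.K'.main (PartrecToTM2.trList [2^n]) : PartrecToTM2.Cfg') = PartrecToTM2.init c [2^n] := by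
      unfold TM2.init PartrecToTM2.init
      congr 1
      funext k
      cases k <;> rfl
    have e5 := PartrecToTM2.tr_eval c [2^n]
    rw [← e4] at e5
    unfold TM2.eval
    change (StateTransition.eval (TM2.step PartrecToTM2.tr) _).Dom ↔ _
    rw [e5]; rfl
  obtain ⟨f, hf, hfe⟩ := ComputablePred.computable_iff.1 hcp
  refine ComputablePred.computable_iff.2
    ⟨fun c => f (Encodable.encode c), hf.comp (Computable.encode (α := Nat.Partrec.Code)), ?_⟩
  funext c
  have h1 := congrFun hfe (Encodable.encode c)
  simp only [] at h1
  rw [← h1]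
  have h3 := key (Encodable.encode c)
  rw [Denumerable.ofNat_encode] at h3
  exact (propext h3).symm


structure AC (Γ Q : Type) where
  q : Q
  p : ℤ
  f : ℤ → Γ

def sg (d : Bool) : ℤ := if d then 1 else -1

def dirB : Dir → Bool
  | .left => false
  | .right => true

section mach
variable {Γ Q : Type} [Inhabited Γ] [Inhabited Q] (M : TM0.Machine Γ Q)

def pass (d : Bool) (C : AC Γ Q) : AC Γ Q :=
  match M C.q (C.f C.p) with
  | none => C
  | some (q', .write b) => ⟨q', C.p, Function.update C.f C.p b⟩
  | some (q', .move e) => if dirB e = d then ⟨q', C.p + sg d, C.f⟩ else C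

def carry (d : Bool) (C : AC Γ Q) (i : ℤ) : Option Q :=
  match M C.q (C.f C.p) with
  | none => none
  | some (_, .write _) => none
  | some (q', .move e) => if dirB e = d then (if i = C.p + sg d then some q' else none) else none

def hd (C : AC Γ Q) (i : ℤ) : Option Q := if i = C.p then some C.q else none

def dlt (d : Bool) (γ : Γ) (h c : Option Q) : Option (Γ × Option Q × Option Q) :=
  match h with
  | none => some (γ, c, none)
  | some q =>
    match M q γ with
    | none => none
    | some (q', .write b) => some (b, some q', none)
    | some (q', .move e) => if dirB e = d then some (γ, none, some q') else some (γ, some q, none)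

def Halted (C : AC Γ Q) : Prop := M C.q (C.f C.p) = none

lemma sg_ne (d : Bool) : sg d ≠ 0 := by cases d <;> simp [sg]

lemma dlt_none (d : Bool) (C : AC Γ Q) (h : Halted M C) :
    dlt M d (C.f C.p) (hd C C.p) (carry M d C C.p) = none := by
  unfold Halted at h
  simp [dlt, hd, h]

lemma dlt_some (d : Bool) (C : AC Γ Q) (i : ℤ) (h : i = C.p → ¬ Halted M C) :
    dlt M d (C.f i) (hd C i) (carry M d C i) =
      some ((pass M d C).f i, hd (pass M d C) i, carry M d C (i + sg d)) := by
  unfold Halted at h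
  have hs := sg_ne d
  by_cases hi : i = C.p
  · subst hi
    rcases hM : M C.q (C.f C.p) with _ | ⟨q', e | b⟩
    · exact absurd hM (h rfl)
    · by_cases he : dirB e = d <;> simp [dlt, hd, carry, pass, hM, he, hs]
    · simp [dlt, hd, carry, pass, hM]
  · rcases hM : M C.q (C.f C.p) with _ | ⟨q', e | b⟩
    · simp [dlt, hd, carry, pass, hM, hi]
    · by_cases he : dirB e = d <;> simp [dlt, hd, carry, pass, hM, hi, he]
    · simp [dlt, hd, carry, pass, hM, hi]

def dirOf (t : ℕ) : Bool := decide (t % 2 = 0)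

def conf (C0 : AC Γ Q) : ℕ → AC Γ Q
  | 0 => C0
  | t+1 => pass M (dirOf (t+1)) (conf C0 t)

def lo (t : ℕ) : ℤ := -(((t+1)/2 : ℕ) : ℤ)
def hi (L t : ℕ) : ℤ := (L : ℤ) + ((t/2 : ℕ) : ℤ)

lemma conf_inv (L : ℕ) (C0 : AC Γ Q) (h1 : lo 0 ≤ C0.p) (h2 : C0.p ≤ hi L 0)
    (h3 : ∀ i, (i < lo 0 ∨ hi L 0 < i) → C0.f i = default) (t : ℕ) :
    lo t ≤ (conf M C0 t).p ∧ (conf M C0 t).p ≤ hi L t ∧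
      ∀ i, (i < lo t ∨ hi L t < i) → (conf M C0 t).f i = default := by
  induction t with
  | zero => exact ⟨h1, h2, h3⟩
  | succ t ih =>
    obtain ⟨a, b, c⟩ := ih
    have hlo : lo (t+1) ≤ lo t := by simp only [lo]; omega
    have hhi : hi L t ≤ hi L (t+1) := by simp only [hi]; omega
    have c' : ∀ i, (i < lo (t+1) ∨ hi L (t+1) < i) → (conf M C0 t).f i = default :=
      fun i hi => c i (by omega)
    simp only [conf, pass]
    rcases hM : M (conf M C0 t).q ((conf M C0 t).f (conf M C0 t).p) with _ | ⟨q', e | b'⟩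
    · refine ⟨?_, ?_, c'⟩ <;> simp only <;> omega
    · by_cases he : dirB e = dirOf (t+1)
      · simp only [he, if_true]
        have hsg : ((t+1)%2 = 0 ∧ sg (dirOf (t+1)) = 1) ∨ ((t+1)%2 = 1 ∧ sg (dirOf (t+1)) = -1) := by
          rcases Nat.mod_two_eq_zero_or_one (t+1) with hh | hh
          · left; simp [sg, dirOf, hh]
          · right; simp [sg, dirOf, hh]
        refine ⟨?_, ?_, c'⟩
        · simp only [lo] at *; omega
        · simp only [hi] at *; omega
      · simp only [he, if_false]
        exact ⟨by omega, by omega, c'⟩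
    · refine ⟨by simp only; omega, by simp only; omega, ?_⟩
      intro i hi'
      simp only
      rw [Function.update_of_ne (by omega)]
      exact c' i hi'

def Sim (C : AC Γ Q) (c : TM0.Cfg Γ Q) : Prop := C.q = c.q ∧ ∀ j, C.f (C.p + j) = c.Tape.nth j

variable {M}
lemma Sim.head {C : AC Γ Q} {c : TM0.Cfg Γ Q} (h : Sim C c) : C.f C.p = c.Tape.head := by
  have := h.2 0
  simpa using this

lemma Sim.halted {C : AC Γ Q} {c : TM0.Cfg Γ Q} (h : Sim C c) :
    Halted M C ↔ TM0.step M c = none := by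
  unfold Halted TM0.step
  rw [h.head, h.1]
  simp

lemma Sim.pass {C : AC Γ Q} {c : TM0.Cfg Γ Q} (h : Sim C c) (d : Bool) {c' : TM0.Cfg Γ Q}
    (hc : TM0.step M c = some c') : Sim (pass M d C) c' ∨
      (pass M d C = C ∧ Sim (FlutedThreeTrans.pass M (!d) C) c') := by
  obtain ⟨q, T⟩ := c
  have hh := h.head
  obtain ⟨h1, h2⟩ := h
  simp only at h1 h2 hh
  have hw : ∀ e, Sim ⟨(default : Q), C.p + sg (dirB e), C.f⟩ ⟨default, T.move e⟩ := by
    intro e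
    refine ⟨rfl, fun j => ?_⟩
    cases e
    · simp only [dirB, sg, Tape.move_left_nth]
      rw [← h2]; simp; congr 1; ring
    · simp only [dirB, sg, Tape.move_right_nth]
      rw [← h2]; simp; congr 1; ring
  unfold TM0.step at hc
  simp only at hc
  rcases hM : M q T.head with _ | ⟨q', e | b⟩
  · simp [hM] at hc
  · simp [hM] at hc
    subst hc
    have hM' : M C.q (C.f C.p) = some (q', .move e) := by rw [h1, hh, hM]
    by_cases he : dirB e = d
    · left
      simp only [FlutedThreeTrans.pass, hM', he, if_true]
      refine ⟨rfl, ?_⟩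
      have := (hw e).2
      rw [he] at this
      exact this
    · right
      have he' : dirB e = !d := by cases d <;> cases hx : dirB e <;> simp_all
      simp only [FlutedThreeTrans.pass, hM', he, if_false, true_and]
      simp only [he', if_true]
      refine ⟨rfl, ?_⟩
      have := (hw e).2
      rw [he'] at this
      exact this
  · simp [hM] at hc
    subst hc
    have hM' : M C.q (C.f C.p) = some (q', .write b) := by rw [h1, hh, hM]
    left
    simp only [FlutedThreeTrans.pass, hM']
    refine ⟨rfl, fun j => ?_⟩
    simp only [Tape.write_nth]
    by_cases hj : j = 0
    · subst hj; simp
    · rw [Function.update_of_ne (by omega), if_neg hj, h2]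

variable (M)
lemma nonhalt_iff (l : List Γ) (C0 : AC Γ Q) (h0 : Sim C0 (TM0.init l)) :
    (∀ t, ¬ Halted M (conf M C0 t)) ↔ ¬ (TM0.eval M l).Dom := by
  have hdom : (TM0.eval M l).Dom ↔ ∃ c, StateTransition.Reaches (TM0.step M) (TM0.init l) c ∧
      TM0.step M c = none := by
    change (StateTransition.eval (TM0.step M) (TM0.init l)).Dom ↔ _
    rw [Part.dom_iff_mem]
    simp only [StateTransition.mem_eval]
  rw [hdom]
  constructor
  · rintro h ⟨c, hr, hc⟩
    have : ∃ t, Sim (conf M C0 t) c := by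
      clear hc
      induction hr with
      | refl => exact ⟨0, h0⟩
      | tail _ hs ih =>
        obtain ⟨t, ht⟩ := ih
        rcases ht.pass (dirOf (t+1)) hs with h | ⟨h1, h2⟩
        · exact ⟨t+1, h⟩
        · refine ⟨t+2, ?_⟩
          have : dirOf (t+2) = !dirOf (t+1) := by
            simp only [dirOf]; by_cases hx : (t+1)%2 = 0
            · simp [hx]; omega
            · simp [hx]; omega
          simp only [conf]
          rw [h1, this]; exact h2
    obtain ⟨t, ht⟩ := this
    exact h t (ht.halted.2 hc)
  · intro h t
    have : ∃ c, StateTransition.Reaches (TM0.step M) (TM0.init l) c ∧ Sim (conf M C0 t) c := by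
      induction t with
      | zero => exact ⟨_, .refl, h0⟩
      | succ t ih =>
        obtain ⟨c, hr, hs⟩ := ih
        rcases hc : TM0.step M c with _ | c'
        · exact absurd ⟨c, hr, hc⟩ h
        · rcases hs.pass (dirOf (t+1)) hc with h | ⟨h1, h2⟩
          · exact ⟨c', hr.tail hc, h⟩
          · refine ⟨c, hr, ?_⟩
            simp only [conf]; rw [h1]; exact hs
    obtain ⟨c, hr, hs⟩ := this
    intro hh
    exact h ⟨c, hr, hs.halted.1 hh⟩

/-- initial abstract configuration -/
def ini (p0 p1 s : Γ) (n : ℕ) : AC Γ Q := ⟨default, 0, fun i =>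
  if i < 0 then default else if i = 0 then p0 else if i = 1 then p1
    else if i ≤ n + 1 then s else default⟩

lemma ini_sim (p0 p1 s : Γ) (n : ℕ) :
    Sim (ini p0 p1 s n : AC Γ Q) (TM0.init (p0 :: p1 :: List.replicate n s)) := by
  refine ⟨rfl, fun j => ?_⟩
  simp only [ini, TM0.init, Tape.mk₁, Tape.mk₂, Tape.mk']
  rcases j with (_ | j) | j
  · simp [Tape.nth]
  · simp only [Tape.nth]
    rcases j with _ | j
    · simp
    · have h1 : ¬ (((j+1+1 : ℕ):ℤ) < 0) := by omega
      have h2 : ¬ (((j+1+1 : ℕ):ℤ) = 0) := by omega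
      have h3 : ¬ (((j+1+1 : ℕ):ℤ) = 1) := by omega
      simp only [Int.ofNat_eq_natCast, zero_add, h1, h2, h3, if_false]
      simp only [ListBlank.tail_mk, ListBlank.nth_mk, List.tail_cons, List.getI_cons_succ, List.getI_eq_getElem?_getD, List.getElem?_replicate]
      by_cases h : j < n
      · simp [h]
      · simp [h]
  · simp [Tape.nth, Int.negSucc_lt_zero, ListBlank.nth_mk, List.getI_nil]
end mach


section sat
variable {A : Type} (S : Str A)

def v1 (a : A) : Fin 1 → A := fun _ => a
def v2 (a b : A) : Fin 2 → A := fun i => if i = 0 then a else b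

lemma snoc0 (v : Fin 0 → A) (a : A) : (Fin.snoc v a : Fin 1 → A) = v1 a := by
  funext i
  have : i = Fin.last 0 := Subsingleton.elim (α := Fin 1) _ _
  subst this
  exact Fin.snoc_last (α := fun _ => A) a v

lemma snoc1 (a b : A) : (Fin.snoc (v1 a) b : Fin 2 → A) = v2 a b := by
  funext i
  fin_cases i
  · rfl
  · rfl

def P1 (p : ℕ) : F 1 := .patom p (by omega) (by omega)
def P2 (p : ℕ) : F 2 := .patom p (by omega) (by omega)
def all0 (α χ : F 1) : F 0 := .all (by omega) (.imp α χ)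
def ex0 (α χ : F 1) : F 0 := .ex (by omega) (.and α χ)
def all1 (α χ : F 2) : F 1 := .all (by omega) (.imp α χ)
def ex1 (α χ : F 2) : F 1 := .ex (by omega) (.and α χ)
def fls2 : F 2 := .fls (by omega)
def tru0 : F 0 := .not (.fls (by omega))

lemma sat_P1 (p : ℕ) (a : A) : Sat S (P1 p) (v1 a) ↔ S.U p a := Iff.rfl
lemma sat_P2 (p : ℕ) (a b : A) : Sat S (P2 p) (v2 a b) ↔ S.U p b := Iff.rfl
lemma sat_T (k : Fin 3) (a b : A) : Sat S (.batom k) (v2 a b) ↔ S.T k a b := Iff.rfl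
lemma sat_and {m : ℕ} (φ ψ : F m) (v) : Sat S (.and φ ψ) v ↔ Sat S φ v ∧ Sat S ψ v := by
  rw [Sat]
lemma sat_or {m : ℕ} (φ ψ : F m) (v) : Sat S (.or φ ψ) v ↔ Sat S φ v ∨ Sat S ψ v := by
  rw [Sat]
lemma sat_imp {m : ℕ} (φ ψ : F m) (v) : Sat S (.imp φ ψ) v ↔ (Sat S φ v → Sat S ψ v) := by
  rw [Sat]
lemma sat_fls2 (v) : Sat S fls2 v ↔ False := by
  rw [fls2, Sat]
lemma sat_tru0 (v) : Sat S tru0 v ↔ True := by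
  rw [tru0, Sat, Sat]; simp
lemma sat_all0 (α χ : F 1) (v) : Sat S (all0 α χ) v ↔ ∀ a, Sat S α (v1 a) → Sat S χ (v1 a) := by
  rw [all0, Sat]; simp only [snoc0, sat_imp]
lemma sat_ex0 (α χ : F 1) (v) : Sat S (ex0 α χ) v ↔ ∃ a, Sat S α (v1 a) ∧ Sat S χ (v1 a) := by
  rw [ex0, Sat]; simp only [snoc0, sat_and]
lemma sat_all1 (α χ : F 2) (a) : Sat S (all1 α χ) (v1 a) ↔
    ∀ b, Sat S α (v2 a b) → Sat S χ (v2 a b) := by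
  rw [all1, Sat]; simp only [snoc1, sat_imp]
lemma sat_ex1 (α χ : F 2) (a) : Sat S (ex1 α χ) (v1 a) ↔
    ∃ b, Sat S α (v2 a b) ∧ Sat S χ (v2 a b) := by
  rw [ex1, Sat]; simp only [snoc1, sat_and]

def bigAnd : List (F 0) → F 0
  | [] => tru0
  | φ :: l => .and φ (bigAnd l)

def bigOr : List ℕ → F 2
  | [] => fls2
  | p :: l => .or (P2 p) (bigOr l)

lemma sat_bigAnd (l : List (F 0)) (v) : Sat S (bigAnd l) v ↔ ∀ φ ∈ l, Sat S φ v := by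
  induction l with
  | nil => simp [bigAnd, sat_tru0]
  | cons φ l ih => simp [bigAnd, sat_and, ih]

lemma sat_bigOr (l : List ℕ) (a b : A) : Sat S (bigOr l) (v2 a b) ↔ ∃ p ∈ l, S.U p b := by
  induction l with
  | nil => simp [bigOr, sat_fls2]
  | cons φ l ih => simp [bigOr, sat_or, ih, sat_P2]

lemma g_P1 (p) : Guarded (P1 p) := .patom _ _ _
lemma g_P2 (p) : Guarded (P2 p) := .patom _ _ _
lemma g_fls2 : Guarded fls2 := .fls _
lemma g_all0 (p) {χ} (h : Guarded χ) : Guarded (all0 (P1 p) χ) := .all0 ⟨_, _, _, rfl⟩ h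
lemma g_ex0 (p) {χ} (h : Guarded χ) : Guarded (ex0 (P1 p) χ) := .ex0 ⟨_, _, _, rfl⟩ h
lemma g_all1 (k) {χ} (h : Guarded χ) : Guarded (all1 (.batom k) χ) :=
  .all1 (.inr ⟨_, rfl⟩) h (fun _ => ⟨_, rfl⟩)
lemma g_ex1 (k) {χ} (h : Guarded χ) : Guarded (ex1 (.batom k) χ) :=
  .ex1 (.inr ⟨_, rfl⟩) h (fun _ => ⟨_, rfl⟩)
lemma g_bigAnd (l : List (F 0)) (h : ∀ φ ∈ l, Guarded φ) : Guarded (bigAnd l) := by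
  induction l with
  | nil => exact .not (.fls _)
  | cons φ l ih => exact .and (h _ (by simp)) (ih (fun φ hφ => h _ (by simp [hφ])))
lemma g_bigOr (l : List ℕ) : Guarded (bigOr l) := by
  induction l with
  | nil => exact .fls _
  | cons φ l ih => exact .or (.patom _ _ _) ih

end sat

abbrev Sym (Γ Q : Type) := Γ × Option Q × Bool

inductive Nx (Q : Type)
  | ini | turn | go (l : Bool) (c : Option Q)

inductive Dat (Γ Q : Type)
  | st | r (s : Option (Sym Γ Q)) (c : Option Q) (fst : Bool) | w (s : Sym Γ Q) (nx : Nx Q)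

structure Tile (Γ Q : Type) where
  col : ZMod 3
  dir : Bool
  dat : Dat Γ Q

instance nx_fin {Q : Type} [Finite Q] : Finite (Nx Q) := by
  let g : Nx Q → Option (Option (Bool × Option Q)) := fun n => match n with
    | .ini => none
    | .turn => some none
    | .go l c => some (some (l, c))
  refine Finite.of_injective g ?_
  rintro (_ | _ | _) (_ | _ | _) h <;> simp_all [g]

instance dat_fin {Γ Q : Type} [Finite Γ] [Finite Q] : Finite (Dat Γ Q) := by
  let g : Dat Γ Q → Option ((Option (Sym Γ Q) × Option Q × Bool) ⊕ (Sym Γ Q × Nx Q)) :=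
    fun n => match n with
    | .st => none
    | .r s c f => some (.inl (s, c, f))
    | .w s n => some (.inr (s, n))
  refine Finite.of_injective g ?_
  rintro (_ | _ | _) (_ | _ | _) h <;> simp_all [g]

instance tile_fin {Γ Q : Type} [Finite Γ] [Finite Q] : Finite (Tile Γ Q) := by
  let g : Tile Γ Q → Fin 3 × Bool × Dat Γ Q := fun t => (t.col, t.dir, t.dat)
  refine Finite.of_injective g ?_
  rintro ⟨a, b, c⟩ ⟨d, e, f⟩ h
  have h1 : a = d := congrArg (fun p => p.1) h
  have h2 : b = e := congrArg (fun p => p.2.1) h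
  have h3 : c = f := congrArg (fun p => p.2.2) h
  subst h1 h2 h3
  rfl

def sgz (d : Bool) : ZMod 3 := if d then 1 else -1

section tiles
variable {Γ Q : Type} [Inhabited Γ] [Inhabited Q] (M : TM0.Machine Γ Q)

def dem : Dat Γ Q → Prop
  | .st => False
  | .w _ .ini => False
  | _ => True

def isTurn : Dat Γ Q → Bool
  | .w _ .turn => true
  | _ => false

def e1 (τ : Tile Γ Q) : ZMod 3 := if isTurn τ.dat then τ.col + 1 else τ.col
def e2 (τ : Tile Γ Q) : ZMod 3 := if isTurn τ.dat then τ.col - 1 else τ.col + sgz τ.dir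

def Rel (τ τ' : Tile Γ Q) : Prop :=
  match τ.dat with
  | .st => False
  | .r (some (γ, h, f)) c fst => ∃ γ' h' c', dlt M τ.dir γ h c = some (γ', h', c') ∧
      τ' = ⟨τ.col + sgz τ.dir, τ.dir, .w (γ', h', fst) (.go f c')⟩
  | .r none c _ => τ' = ⟨τ.col + sgz τ.dir, τ.dir, .w (default, c, false) .turn⟩
  | .w _ .ini => False
  | .w s .turn => τ' = ⟨τ.col, !τ.dir, .r (some s) none true⟩
  | .w _ (.go true c) => τ' = ⟨τ.col + sgz τ.dir, τ.dir, .r none c false⟩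
  | .w _ (.go false c) => ∃ s, τ' = ⟨τ.col + sgz τ.dir, τ.dir, .r (some s) c false⟩

lemma Rel.dem {τ τ' : Tile Γ Q} (h : Rel M τ τ') : dem τ'.dat := by
  obtain ⟨k, d, (_ | ⟨_ | ⟨γ, h, f⟩, c, fst⟩ | ⟨s, _ | _ | ⟨_ | _, c⟩⟩)⟩ := τ <;>
    simp only [Rel] at h
  · subst h; trivial
  · obtain ⟨_, _, _, _, rfl⟩ := h; trivial
  · subst h; trivial
  · obtain ⟨_, rfl⟩ := h; trivial
  · subst h; trivial

/-- tiles that clash / match -/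
def WR (τ τ' : Tile Γ Q) (s s' : Sym Γ Q) : Prop :=
  τ'.col = τ.col ∧ τ'.dir = !τ.dir ∧ (∃ nx, τ.dat = .w s nx) ∧ ∃ c f, τ'.dat = .r (some s') c f

def aSym (p0 p1 s : Γ) (i : ℕ) : Γ := if i = 0 then p0 else if i = 1 then p1 else s

def tileIni (p0 p1 s : Γ) (nx : Nx Q) (j : ℕ) : Tile Γ Q :=
  ⟨(j : ZMod 3), true, if j % 2 = 0 then .st else
    .w (aSym p0 p1 s (j/2), if j/2 = 0 then some default else none, decide (j/2 = 0)) nx⟩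

variable [Finite Γ] [Finite Q]

noncomputable def code (τ : Tile Γ Q) : ℕ := (Finite.equivFin (Tile Γ Q) τ).val
variable (Γ Q) in
noncomputable def KK : ℕ := Nat.card (Tile Γ Q)

lemma code_lt (τ : Tile Γ Q) : code τ < KK Γ Q := (Finite.equivFin (Tile Γ Q) τ).isLt
lemma code_inj {τ τ' : Tile Γ Q} (h : code τ = code τ') : τ = τ' :=
  (Finite.equivFin (Tile Γ Q)).injective (Fin.ext h)

variable (Γ Q) in
noncomputable def tiles : List (Tile Γ Q) :=
  (@Finset.univ _ (Fintype.ofFinite (Tile Γ Q))).toList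
lemma mem_tiles (τ : Tile Γ Q) : τ ∈ tiles Γ Q := by
  unfold tiles; simp

open Classical in
noncomputable def fa (τ : Tile Γ Q) : F 0 :=
  if dem τ.dat then all0 (P1 (code τ)) (ex1 (.batom (e1 τ)) (.and (.batom (e2 τ))
    (bigOr (((tiles Γ Q).filter (fun τ' => Rel M τ τ')).map code)))) else tru0

open Classical in
noncomputable def fb (τ τ' : Tile Γ Q) : F 0 :=
  if ∃ s s', WR τ τ' s s' then
    all0 (P1 (code τ)) (all1 (.batom (τ.col + sgz τ.dir)) (.imp (P2 (code τ'))
      (if ∃ s, WR τ τ' s s then .batom (τ.col - sgz τ.dir : ZMod 3) else fls2)))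
  else tru0

noncomputable def fixF : F 0 :=
  .and (bigAnd ((tiles Γ Q).map (fa M)))
    (bigAnd ((tiles Γ Q).flatMap (fun τ => (tiles Γ Q).map (fb τ))))

lemma g_fixF : Guarded (fixF M) := by
  refine .and (g_bigAnd _ ?_) (g_bigAnd _ ?_)
  · intro φ hφ
    simp only [List.mem_map] at hφ
    obtain ⟨τ, _, rfl⟩ := hφ
    unfold fa
    split_ifs
    · exact g_all0 _ (g_ex1 _ (.and (.batom _) (g_bigOr _)))
    · exact .not (.fls _)
  · intro φ hφ
    simp only [List.mem_flatMap, List.mem_map] at hφ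
    obtain ⟨τ, _, τ', _, rfl⟩ := hφ
    unfold fb
    split_ifs
    · exact g_all0 _ (g_all1 _ (.imp (g_P2 _) (.batom _)))
    · exact g_all0 _ (g_all1 _ (.imp (g_P2 _) (g_fls2)))
    · exact .not (.fls _)

structure FixSem {A : Type} (U : Tile Γ Q → A → Prop) (T : ZMod 3 → A → A → Prop) : Prop where
  ha : ∀ τ a, dem τ.dat → U τ a → ∃ b τ', T (e1 τ) a b ∧ T (e2 τ) a b ∧ Rel M τ τ' ∧ U τ' b
  hb : ∀ τ τ' s s' a b, WR τ τ' s s' → U τ a → T (τ.col + sgz τ.dir) a b → U τ' b →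
    s = s' ∧ T (τ.col - sgz τ.dir) a b

lemma sat_fixF {A : Type} (S : Str A) (v) :
    Sat S (fixF M) v ↔ FixSem M (fun τ => S.U (code τ)) S.T := by
  classical
  unfold fixF
  rw [sat_and, sat_bigAnd, sat_bigAnd]
  constructor
  · rintro ⟨h1, h2⟩
    constructor
    · intro τ a hd hu
      have := h1 (fa M τ) (List.mem_map_of_mem (mem_tiles τ))
      rw [fa, if_pos hd, sat_all0] at this
      have := this a hu
      rw [sat_ex1] at this
      obtain ⟨b, hb1, hb2⟩ := this
      rw [sat_and, sat_bigOr] at hb2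
      obtain ⟨hb2, p, hp, hpb⟩ := hb2
      simp only [List.mem_map, List.mem_filter, decide_eq_true_eq] at hp
      obtain ⟨τ', ⟨_, hr⟩, rfl⟩ := hp
      exact ⟨b, τ', hb1, hb2, hr, hpb⟩
    · intro τ τ' s s' a b hw hu ht hu'
      have := h2 (fb τ τ') (List.mem_flatMap.2 ⟨τ, mem_tiles τ, List.mem_map_of_mem (mem_tiles τ')⟩)
      rw [fb, if_pos ⟨s, s', hw⟩, sat_all0] at this
      have := this a hu
      rw [sat_all1] at this
      have := this b ht
      rw [sat_imp] at this
      have := this hu'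
      split_ifs at this with hs
      · obtain ⟨s0, hs⟩ := hs
        refine ⟨?_, this⟩
        obtain ⟨_, _, ⟨nx, h1⟩, c, f, h2⟩ := hw
        obtain ⟨_, _, ⟨nx', h1'⟩, c', f', h2'⟩ := hs
        rw [h1] at h1'
        rw [h2] at h2'
        simp only [Dat.w.injEq, Dat.r.injEq, Option.some.injEq] at h1' h2'
        rw [h1'.1, h2'.1]
      · rw [sat_fls2] at this; exact this.elim
  · rintro ⟨h1, h2⟩
    refine ⟨?_, ?_⟩
    · intro φ hφ
      simp only [List.mem_map] at hφ
      obtain ⟨τ, _, rfl⟩ := hφ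
      unfold fa
      split_ifs with hd
      · rw [sat_all0]
        intro a ha
        obtain ⟨b, τ', x1, x2, x3, x4⟩ := h1 τ a hd ha
        rw [sat_ex1]
        refine ⟨b, x1, ?_⟩
        rw [sat_and, sat_bigOr]
        exact ⟨x2, code τ', List.mem_map_of_mem (by simp [mem_tiles, x3]), x4⟩
      · rw [sat_tru0]; trivial
    · intro φ hφ
      simp only [List.mem_flatMap, List.mem_map] at hφ
      obtain ⟨τ, _, τ', _, rfl⟩ := hφ
      unfold fb
      split_ifs with hw hs
      · obtain ⟨s, s', hw⟩ := hw
        rw [sat_all0]; intro a ha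
        rw [sat_all1]; intro b hb
        rw [sat_imp]; intro hc
        exact (h2 τ τ' s s' a b hw ha hb hc).2
      · obtain ⟨s, s', hw⟩ := hw
        rw [sat_all0]; intro a ha
        rw [sat_all1]; intro b hb
        rw [sat_imp]; intro hc
        have := (h2 τ τ' s s' a b hw ha hb hc).1
        subst this
        exact absurd ⟨_, hw⟩ hs
      · rw [sat_tru0]; trivial

end tiles


section chain
variable {Γ Q : Type} [Inhabited Γ] [Inhabited Q] (M : TM0.Machine Γ Q) (p0 p1 s : Γ)
variable [Finite Γ] [Finite Q]

noncomputable def tl (nx : Nx Q) (j : ℕ) : ℕ := code (tileIni p0 p1 s nx j)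

def c3 (j : ℕ) : Fin 3 := ⟨j % 3, Nat.mod_lt _ (by omega)⟩

lemma c3_eq (j : ℕ) : c3 j = (j : ZMod 3) := by
  have : ((c3 j : ZMod 3)).val = ((j : ZMod 3)).val := by
    rw [ZMod.val_natCast]; rfl
  exact ZMod.val_injective 3 this

noncomputable def link (nx : Nx Q) (j : ℕ) : F 0 :=
  all0 (P1 (KK Γ Q + j)) (.and (P1 (tl p0 p1 s nx j))
    (ex1 (.batom (c3 j)) (.and (.batom (c3 (j+1))) (P2 (KK Γ Q + (j+1))))))

variable (Q) in
noncomputable def chain : ℕ → F 0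
  | 0 => ex0 (P1 (KK Γ Q + 0)) (P1 (KK Γ Q + 0))
  | j+1 => .and (chain j) (link p0 p1 s (Nx.ini : Nx Q) j)

variable (Q) in
noncomputable def fin (N : ℕ) : F 0 :=
  all0 (P1 (KK Γ Q + N)) (P1 (tl p0 p1 s (Nx.turn : Nx Q) N))

noncomputable def phi (n : ℕ) : F 0 :=
  .and (fixF M) (.and (chain Q p0 p1 s (2*n+3)) (fin Q p0 p1 s (2*n+3)))

lemma g_chain (j : ℕ) : Guarded (chain Q p0 p1 s j) := by
  induction j with
  | zero => exact g_ex0 _ (g_P1 _)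
  | succ j ih => exact .and ih (g_all0 _ (.and (g_P1 _) (g_ex1 _ (.and (.batom _) (g_P2 _)))))

lemma g_phi (n : ℕ) : Guarded (phi M p0 p1 s n) :=
  .and (g_fixF M) (.and (g_chain _ _ _ _) (g_all0 _ (g_P1 _)))

/-- semantics of the chain part -/
structure ChSem {A : Type} (V : ℕ → A → Prop) (U : Tile Γ Q → A → Prop)
    (T : ZMod 3 → A → A → Prop) (N : ℕ) : Prop where
  h0 : ∃ a, V 0 a
  hu : ∀ j < N, ∀ a, V j a → U (tileIni p0 p1 s .ini j) a
  ht : ∀ j < N, ∀ a, V j a → ∃ b, T (j : ZMod 3) a b ∧ T ((j : ZMod 3) + 1) a b ∧ V (j+1) b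
  hN : ∀ a, V N a → U (tileIni p0 p1 s .turn N) a

lemma sat_link {A : Type} (S : Str A) (v) (j : ℕ) :
    Sat S (link p0 p1 s (Nx.ini : Nx Q) j) v ↔ ∀ a, S.U (KK Γ Q + j) a →
      S.U (code (tileIni p0 p1 s (Nx.ini : Nx Q) j)) a ∧
      ∃ b, S.T (j : ZMod 3) a b ∧ S.T ((j : ZMod 3) + 1 : ZMod 3) a b ∧ S.U (KK Γ Q + (j+1)) b := by
  unfold link
  rw [sat_all0]
  simp only [sat_and, sat_P1, sat_ex1, sat_P2, tl, c3_eq, Nat.cast_add, Nat.cast_one]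
  exact Iff.rfl

lemma sat_chain {A : Type} (S : Str A) (v) (N : ℕ) :
    Sat S (chain Q p0 p1 s N) v ↔ (∃ a, S.U (KK Γ Q + 0) a) ∧
      ∀ j < N, Sat S (link p0 p1 s (Nx.ini : Nx Q) j) v := by
  induction N with
  | zero => simp [chain, sat_ex0, sat_P1]
  | succ N ih =>
    rw [chain, sat_and, ih, and_assoc]
    refine and_congr_right fun _ => ?_
    constructor
    · rintro ⟨h1, h2⟩ j hj
      rcases Nat.lt_succ_iff_lt_or_eq.1 hj with h | rfl
      · exact h1 j h
      · exact h2
    · intro h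
      exact ⟨fun j hj => h j (by omega), h N (by omega)⟩

lemma sat_phi {A : Type} (S : Str A) (v) (n : ℕ) :
    Sat S (phi M p0 p1 s n) v ↔ FixSem M (fun τ => S.U (code τ)) S.T ∧
      ChSem p0 p1 s (fun j => S.U (KK Γ Q + j)) (fun τ : Tile Γ Q => S.U (code τ)) S.T (2*n+3) := by
  rw [phi, sat_and, sat_and, sat_fixF, sat_chain, fin, sat_all0]
  simp only [sat_link, sat_P1, tl]
  refine and_congr_right fun _ => ?_
  constructor
  · rintro ⟨⟨h1, h2⟩, h3⟩
    exact ⟨h1, fun j hj a ha => (h2 j hj a ha).1, fun j hj a ha => (h2 j hj a ha).2, h3⟩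
  · rintro ⟨h1, h2, h3, h4⟩
    exact ⟨⟨h1, fun j hj a ha => ⟨h2 j hj a ha, h3 j hj a ha⟩⟩, h4⟩

def nrm (j : ℕ) : ℕ := if j < 10 then j else 4 + (j + 2) % 6

lemma tl_nrm (nx : Nx Q) (j : ℕ) : tl p0 p1 s nx (nrm j) = tl p0 p1 s nx j := by
  unfold nrm
  split_ifs with h
  · rfl
  · unfold tl tileIni
    have h1 : ((4 + (j+2)%6 : ℕ) : ZMod 3) = (j : ZMod 3) := by
      rw [ZMod.natCast_eq_natCast_iff]
      unfold Nat.ModEq; omega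
    have h2 : (4 + (j+2)%6) % 2 = j % 2 := by omega
    have a1 : ¬ ((4 + (j+2)%6) / 2 = 0) := by omega
    have a2 : ¬ ((4 + (j+2)%6) / 2 = 1) := by omega
    have a3 : ¬ (j / 2 = 0) := by omega
    have a4 : ¬ (j / 2 = 1) := by omega
    simp only [h1, h2, aSym, a1, a2, a3, a4, if_false]

lemma primrec_fin (g : ℕ → ℕ) (h : ∀ j, g (nrm j) = g j) : Primrec g := by
  have : g = fun j => ((List.range 10).map g).getD (nrm j) 0 := by
    funext j
    have hj : nrm j < 10 := by unfold nrm; split_ifs <;> omega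
    rw [List.getD_eq_getElem _ _ (by simpa using hj)]
    simp [h]
  rw [this]
  have hn : Primrec nrm := by
    unfold nrm
    exact Primrec.ite (Primrec.nat_lt.comp Primrec.id (Primrec.const 10)) Primrec.id
      (Primrec.nat_add.comp (Primrec.const 4)
        (Primrec.nat_mod.comp (Primrec.nat_add.comp Primrec.id (Primrec.const 2)) (Primrec.const 6)))
  exact (Primrec.list_getD 0).comp (Primrec.const _) hn

lemma pr_pair {f g : ℕ → ℕ} (hf : Primrec f) (hg : Primrec g) :
    Primrec (fun n => Nat.pair (f n) (g n)) := Primrec₂.natPair.comp hf hg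

lemma primrec_link (nx : Nx Q) : Primrec (fun j => encode (link p0 p1 s nx j)) := by
  have hK : ∀ f : ℕ → ℕ, Primrec f → Primrec (fun j => KK Γ Q + f j) := fun f hf =>
    Primrec.nat_add.comp (Primrec.const _) hf
  have hs : Primrec (fun j : ℕ => j + 1) := Primrec.succ
  have hm : ∀ f : ℕ → ℕ, Primrec f → Primrec (fun j => (c3 (f j)).val) := fun f hf =>
    Primrec.nat_mod.comp hf (Primrec.const 3)
  have ht := primrec_fin _ (tl_nrm p0 p1 s nx)
  have c := fun k : ℕ => (Primrec.const k : Primrec (fun _ : ℕ => k))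
  simp only [link, all0, ex1, P1, P2, encode]
  exact pr_pair (c _) (pr_pair (c _) (pr_pair (pr_pair (c _) (hK _ Primrec.id))
    (pr_pair (c _) (pr_pair (pr_pair (c _) ht)
      (pr_pair (c _) (pr_pair (c _) (pr_pair (pr_pair (c _) (hm _ Primrec.id))
        (pr_pair (c _) (pr_pair (pr_pair (c _) (hm _ hs)) (pr_pair (c _) (hK _ hs)))))))))))

lemma primrec_chain : Primrec (fun j => encode (chain Q p0 p1 s j)) := by
  have hl := primrec_link p0 p1 s (Nx.ini : Nx Q)
  have : Primrec₂ (fun (j e : ℕ) => Nat.pair 4 (Nat.pair e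
      (encode (link p0 p1 s (Nx.ini : Nx Q) j)))) :=
    Primrec₂.natPair.comp (Primrec.const 4) (Primrec₂.natPair.comp Primrec.snd (hl.comp Primrec.fst))
  refine (Primrec.nat_rec₁ (encode (chain Q p0 p1 s 0)) this).of_eq ?_
  intro j
  induction j with
  | zero => rfl
  | succ j ih => simp only [chain, encode] at ih ⊢; rw [ih]

lemma primrec_phi : Primrec (fun n => encode (phi M p0 p1 s n)) := by
  have c := fun k : ℕ => (Primrec.const k : Primrec (fun _ : ℕ => k))
  have hN : Primrec (fun n : ℕ => 2*n+3) :=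
    Primrec.nat_add.comp (Primrec.nat_mul.comp (c 2) Primrec.id) (c 3)
  have ht := primrec_fin _ (tl_nrm p0 p1 s (Nx.turn : Nx Q))
  simp only [phi, fin, all0, P1, encode]
  exact pr_pair (c _) (pr_pair (c _) (pr_pair (c _) (pr_pair ((primrec_chain p0 p1 s).comp hN)
    (pr_pair (c _) (pr_pair (c _) (pr_pair (pr_pair (c _) (Primrec.nat_add.comp (c _) hN))
      (pr_pair (c _) (ht.comp hN))))))))

end chain


def fs (L t : ℕ) : ℤ := if t % 2 = 0 then lo t else hi L t
def rx (t : ℕ) (i : ℤ) : ℤ := 2*i + (t%2 : ℕ)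
def wx (t : ℕ) (i : ℤ) : ℤ := 2*i + 1 - (t%2 : ℕ)

lemma geo (L t : ℕ) :
    (t%2 = 0 ∧ dirOf t = true ∧ dirOf (t+1) = false ∧ sg (dirOf t) = 1 ∧ sg (dirOf (t+1)) = -1 ∧
      fs L t = lo t ∧ fs L (t+1) = hi L t ∧ fs L (t+2) = lo t - 1 ∧
      lo (t+1) = lo t - 1 ∧ hi L (t+1) = hi L t ∧ (t+1)%2 = 1) ∨
    (t%2 = 1 ∧ dirOf t = false ∧ dirOf (t+1) = true ∧ sg (dirOf t) = -1 ∧ sg (dirOf (t+1)) = 1 ∧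
      fs L t = hi L t ∧ fs L (t+1) = lo t ∧ fs L (t+2) = hi L t + 1 ∧
      lo (t+1) = lo t ∧ hi L (t+1) = hi L t + 1 ∧ (t+1)%2 = 0) := by
  rcases Nat.mod_two_eq_zero_or_one t with h | h
  · left
    have h1 : (t+1)%2 = 1 := by omega
    have h2 : (t+2)%2 = 0 := by omega
    have hd : dirOf t = true := by simp [dirOf, h]
    have hd1 : dirOf (t+1) = false := by simp [dirOf, h1]
    rw [hd, hd1]
    simp only [fs, h, h1, h2, if_true, sg, lo, hi]
    simp
    omega
  · right
    have h1 : (t+1)%2 = 0 := by omega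
    have h2 : (t+2)%2 = 1 := by omega
    have hd : dirOf t = false := by simp [dirOf, h]
    have hd1 : dirOf (t+1) = true := by simp [dirOf, h1]
    rw [hd, hd1]
    simp only [fs, h, h1, h2, if_true, sg, lo, hi]
    simp
    omega

lemma lohi (L t : ℕ) : lo t ≤ hi L t := by simp only [lo, hi]; omega

lemma sgz_eq (d : Bool) : sgz d = ((sg d : ℤ) : ZMod 3) := by cases d <;> simp [sgz, sg]

lemma col1 (t : ℕ) (i : ℤ) : ((rx t i : ℤ) : ZMod 3) + sgz (dirOf t) = ((wx t i : ℤ) : ZMod 3) := by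
  rw [sgz_eq, ← Int.cast_add]
  congr 1
  have := geo 0 t
  simp only [rx, wx]; omega

lemma col2 (t : ℕ) (i : ℤ) :
    ((wx t i : ℤ) : ZMod 3) + sgz (dirOf t) = ((rx t (i + sg (dirOf t)) : ℤ) : ZMod 3) := by
  rw [sgz_eq, ← Int.cast_add]
  congr 1
  have := geo 0 t
  simp only [rx, wx]; omega

lemma col3 (t : ℕ) (i : ℤ) : wx t i = rx (t+1) i := by
  have := geo 0 t
  simp only [rx, wx]; omega

lemma dir_succ (t : ℕ) : dirOf (t+1) = !dirOf t := by
  rcases geo 0 t with h | h <;> simp [h.2.1, h.2.2.1]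

section tilemap
variable {Γ Q : Type} [Inhabited Γ] [Inhabited Q] (M : TM0.Machine Γ Q) (L : ℕ) (C0 : AC Γ Q)

def symAt (t : ℕ) (i : ℤ) : Sym Γ Q :=
  ((conf M C0 t).f i, hd (conf M C0 t) i, decide (i = fs L t))

def rD : ℕ → ℤ → Dat Γ Q
  | 0, _ => .st
  | t+1, i => .r (if i = fs L (t+2) then none else some (symAt M L C0 t i))
      (carry M (dirOf (t+1)) (conf M C0 t) i) (decide (i = fs L (t+1)))

def wD : ℕ → ℤ → Dat Γ Q
  | 0, i => .w (symAt M L C0 0 i) (if i = fs L 1 then .turn else .ini)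
  | t+1, i => .w (symAt M L C0 (t+1) i) (if i = fs L (t+2) then .turn else
      .go (decide (i = fs L t)) (carry M (dirOf (t+1)) (conf M C0 t) (i + sg (dirOf (t+1)))))

def rT (t : ℕ) (i : ℤ) : Tile Γ Q := ⟨((rx t i : ℤ) : ZMod 3), dirOf t, rD M L C0 t i⟩
def wT (t : ℕ) (i : ℤ) : Tile Γ Q := ⟨((wx t i : ℤ) : ZMod 3), dirOf t, wD M L C0 t i⟩

def Inv : Prop := ∀ t, lo t ≤ (conf M C0 t).p ∧ (conf M C0 t).p ≤ hi L t ∧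
      ∀ i, (i < lo t ∨ hi L t < i) → (conf M C0 t).f i = default

lemma relA (t : ℕ) (i : ℤ) (hi : i ≠ fs L (t+2)) (τ' : Tile Γ Q) :
    Rel M (rT M L C0 (t+1) i) τ' ↔
      ((i = (conf M C0 t).p → ¬ Halted M (conf M C0 t)) ∧ τ' = wT M L C0 (t+1) i) := by
  simp only [rT, rD, Rel, if_neg hi, symAt, col1, wT, wD]
  by_cases h : i = (conf M C0 t).p → ¬ Halted M (conf M C0 t)
  · rw [dlt_some M _ _ _ h]
    simp only [conf, hd]
    constructor
    · rintro ⟨γ', h', c', h1, rfl⟩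
      simp only [Option.some.injEq, Prod.mk.injEq] at h1
      obtain ⟨rfl, rfl, rfl⟩ := h1
      exact ⟨h, rfl⟩
    · rintro ⟨_, rfl⟩
      exact ⟨_, _, _, rfl, rfl⟩
  · push Not at h
    obtain ⟨rfl, h⟩ := h
    rw [dlt_none M _ _ h]
    simp [h]

variable {L C0} in
lemma relB (hinv : Inv M L C0) (t : ℕ) (i : ℤ) (hi : i = fs L (t+2)) (τ' : Tile Γ Q) :
    Rel M (rT M L C0 (t+1) i) τ' ↔ τ' = wT M L C0 (t+1) i := by
  have hg := geo L t
  have hlh := lohi L t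
  obtain ⟨h1, h2, h3⟩ := hinv t
  have hp : i ≠ (conf M C0 t).p := by omega
  have hf := h3 i (by omega)
  have hds := dlt_some M (dirOf (t+1)) (conf M C0 t) i (fun h => absurd h hp)
  have hh : hd (conf M C0 t) i = none := by simp [hd, hp]
  rw [hh] at hds
  simp only [dlt, Option.some.injEq, Prod.mk.injEq] at hds
  have hn : ¬ (i = fs L (t+1)) := by omega
  simp only [rT, rD, Rel, if_pos hi, col1, wT, wD, symAt, conf, ← hds.1, ← hds.2.1, hf, hn,
    decide_false]

variable {L C0} in
lemma relC (hinv : Inv M L C0) (t : ℕ) (i : ℤ) (hi : i = fs L (t+1)) (τ' : Tile Γ Q) :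
    Rel M (wT M L C0 t i) τ' ↔ τ' = rT M L C0 (t+1) i := by
  have hg := geo L t
  have hlh := lohi L t
  obtain ⟨h1, h2, h3⟩ := hinv t
  have hc : carry M (dirOf (t+1)) (conf M C0 t) i = none := by
    have : i ≠ (conf M C0 t).p + sg (dirOf (t+1)) := by omega
    unfold carry
    split
    · rfl
    · rfl
    · simp [this]
  have hn : ¬ (i = fs L (t+2)) := by omega
  have hw : wD M L C0 t i = .w (symAt M L C0 t i) .turn := by
    cases t <;> simp [wD, hi]
  simp only [wT, Rel, hw, rT, rD, if_neg hn, hc, col3, decide_eq_true hi]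
  rw [dir_succ]

lemma relD (t : ℕ) (i : ℤ) (hi : i = fs L t) (τ' : Tile Γ Q) :
    Rel M (wT M L C0 (t+1) i) τ' ↔ τ' = rT M L C0 (t+1) (i + sg (dirOf (t+1))) := by
  have hg := geo L t
  have hlh := lohi L t
  have h2 : ¬ i = fs L (t+2) := by omega
  have h3 : i + sg (dirOf (t+1)) = fs L (t+2) := by omega
  have h4 : ¬ i + sg (dirOf (t+1)) = fs L (t+1) := by omega
  simp only [wT, wD, Rel, if_neg h2, decide_eq_true hi, col2, rT, rD, if_pos h3, decide_eq_false h4]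

lemma relE (t : ℕ) (i : ℤ) (hi : i ≠ fs L t) (h2 : i ≠ fs L (t+2)) (τ' : Tile Γ Q) :
    Rel M (wT M L C0 (t+1) i) τ' ↔ ∃ s, τ' = ⟨((rx (t+1) (i + sg (dirOf (t+1))) : ℤ) : ZMod 3),
      dirOf (t+1), .r (some s) (carry M (dirOf (t+1)) (conf M C0 t) (i + sg (dirOf (t+1)))) false⟩ := by
  simp only [wT, wD, Rel, if_neg h2, hi, decide_false, col2]

lemma rT_eq (t : ℕ) (i : ℤ) (h1 : lo (t+1) ≤ i) (h1' : i ≤ FlutedThreeTrans.hi L (t+1))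
    (hi : i ≠ fs L t) (h2 : i ≠ fs L (t+2)) :
    rT M L C0 (t+1) (i + sg (dirOf (t+1))) = ⟨((rx (t+1) (i + sg (dirOf (t+1))) : ℤ) : ZMod 3),
      dirOf (t+1), .r (some (symAt M L C0 t (i + sg (dirOf (t+1)))))
        (carry M (dirOf (t+1)) (conf M C0 t) (i + sg (dirOf (t+1)))) false⟩ := by
  have hg := geo L t
  have h3 : ¬ i + sg (dirOf (t+1)) = fs L (t+2) := by omega
  have h4 : ¬ i + sg (dirOf (t+1)) = fs L (t+1) := by omega
  simp only [rT, rD, if_neg h3, decide_eq_false h4]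

lemma wr_wT (t : ℕ) (i : ℤ) (s' : Sym Γ Q) (τ' : Tile Γ Q) (c f)
    (h : τ' = ⟨((rx (t+1) i : ℤ) : ZMod 3), dirOf (t+1), .r (some s') c f⟩) :
    WR (wT M L C0 t i) τ' (symAt M L C0 t i) s' := by
  subst h
  refine ⟨?_, ?_, ?_, _, _, rfl⟩
  · simp only [wT, col3]
  · simp only [wT, dir_succ]
  · cases t
    · exact ⟨_, rfl⟩
    · exact ⟨_, rfl⟩

lemma turn_wT (t : ℕ) (i : ℤ) : isTurn (wT M L C0 t i).dat = decide (i = fs L (t+1)) := by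
  cases t
  · by_cases h : i = fs L 1 <;> simp [wT, wD, h, isTurn]
  · rename_i t
    by_cases h : i = fs L (t+2) <;> simp [wT, wD, h, isTurn]

lemma turn_rT (t : ℕ) (i : ℤ) : isTurn (rT M L C0 t i).dat = false := by
  cases t <;> rfl

end tilemap


def cell (L t m : ℕ) : ℤ := fs L t + sg (dirOf t) * m

lemma hilo (L t : ℕ) : hi L t - lo t = L + t := by simp only [lo, hi]; omega

lemma cell_cases (L t : ℕ) :
    (fs L t = lo t ∧ fs L (t+1) = hi L t ∧ sg (dirOf t) = 1 ∧ ∀ m, cell L t m = lo t + m) ∨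
    (fs L t = hi L t ∧ fs L (t+1) = lo t ∧ sg (dirOf t) = -1 ∧ ∀ m, cell L t m = hi L t - m) := by
  rcases geo L t with h | h
  · left
    refine ⟨by omega, by omega, by omega, fun m => ?_⟩
    unfold cell
    rw [h.2.2.2.1]; omega
  · right
    refine ⟨by omega, by omega, by omega, fun m => ?_⟩
    unfold cell
    rw [h.2.2.2.1]; omega

lemma cell_zero (L t : ℕ) : cell L t 0 = fs L t := by simp [cell]
lemma cell_succ (L t m : ℕ) : cell L t (m+1) = cell L t m + sg (dirOf t) := by
  simp only [cell]; push_cast; ring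
lemma cell_opp (L t m m' : ℕ) (h : m + m' = L + t) : cell L (t+1) m = cell L t m' := by
  have h1 := cell_cases L t
  have h2 := cell_cases L (t+1)
  have h3 := hilo L t
  have h4 := geo L t
  rcases h1 with h1 | h1 <;> rcases h2 with h2 | h2 <;>
    rw [h1.2.2.2 m', h2.2.2.2 m] <;> omega
lemma cell_last (L t m : ℕ) (h : m = L + t) : cell L t m = fs L (t+1) := by
  have h1 := cell_cases L t
  have h3 := hilo L t
  rcases h1 with h1 | h1 <;> rw [h1.2.2.2 m] <;> omega
lemma cell_reg (L t m : ℕ) (h : m ≤ L + t) : lo t ≤ cell L t m ∧ cell L t m ≤ hi L t := by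
  have h1 := cell_cases L t
  have h3 := hilo L t
  rcases h1 with h1 | h1 <;> rw [h1.2.2.2 m] <;> omega
lemma cell_inj (L t m m' : ℕ) (h : cell L t m = cell L t m') : m = m' := by
  have h1 := cell_cases L t
  rcases h1 with h1 | h1 <;> rw [h1.2.2.2 m, h1.2.2.2 m'] at h <;> omega
lemma cell_surj (L t : ℕ) (i : ℤ) (h : lo t ≤ i) (h' : i ≤ hi L t) :
    ∃ m, m ≤ L + t ∧ cell L t m = i := by
  have h1 := cell_cases L t
  have h3 := hilo L t
  rcases h1 with h1 | h1
  · refine ⟨(i - lo t).toNat, ?_, ?_⟩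
    · omega
    · rw [h1.2.2.2]; omega
  · refine ⟨(hi L t - i).toNat, ?_, ?_⟩
    · omega
    · rw [h1.2.2.2]; omega

def base (L : ℕ) : ℕ → ℕ
  | 0 => 0
  | t+1 => base L t + 2 * (L + 1 + t)

lemma exists_path {α : Type} (P : ℕ → α → Prop) (R : ℕ → α → α → Prop) (h0 : ∃ a, P 0 a)
    (hs : ∀ n a, P n a → ∃ b, P (n+1) b ∧ R n a b) :
    ∃ f : ℕ → α, ∀ n, P n (f n) ∧ R n (f n) (f (n+1)) := by
  choose! F hF using hs
  obtain ⟨a, ha⟩ := h0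
  let f : ℕ → α := fun n => Nat.rec a (fun n x => F n x) n
  have hf : ∀ n, P n (f n) := by
    intro n
    induction n with
    | zero => exact ha
    | succ n ih => exact (hF n _ ih).1
  exact ⟨f, fun n => ⟨hf n, (hF n _ (hf n)).2⟩⟩

section sound
variable {Γ Q : Type} [Inhabited Γ] [Inhabited Q] (M : TM0.Machine Γ Q) (p0 p1 s : Γ)
variable {A : Type} (U : Tile Γ Q → A → Prop) (T : ZMod 3 → A → A → Prop)

lemma inv_ini (n : ℕ) : Inv M (n+1) (ini p0 p1 s n) := by
  intro t
  refine conf_inv M (n+1) _ ?_ ?_ ?_ t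
  · simp [lo, ini]
  · simp [hi, ini]; omega
  · intro i hi'
    simp only [lo, hi] at hi'
    push_cast at hi'
    simp only [ini]
    split_ifs <;> first | rfl | omega

lemma tileIni_r (n m : ℕ) (nx : Nx Q) :
    tileIni p0 p1 s nx (2*m) = rT M (n+1) (ini p0 p1 s n) 0 m := by
  simp [tileIni, rT, rD, rx, dirOf]

lemma tileIni_w (n m : ℕ) (nx : Nx Q) (hm : m ≤ n+1) (hnx : nx = if m = n+1 then .turn else .ini) :
    tileIni p0 p1 s nx (2*m+1) = wT M (n+1) (ini p0 p1 s n) 0 m := by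
  have h1 : (2*m+1)%2 = 1 := by omega
  have h2 : (2*m+1)/2 = m := by omega
  have h3 : fs (n+1) 1 = ((n+1 : ℕ) : ℤ) := by simp [fs, hi]
  have h4 : fs (n+1) 0 = 0 := by simp [fs, lo]
  subst hnx
  simp only [tileIni, wT, wD, wx, dirOf, h1, h2, h3, Nat.cast_inj, symAt, conf, ini, hd, h4, aSym,
    Nat.cast_eq_zero, Nat.cast_eq_one]
  have h5 : ¬ ((m:ℤ) < 0) := by omega
  have h6 : (m:ℤ) ≤ n + 1 := by omega
  simp [h5, h6]

structure Path (N : ℕ) (g : ℕ → A) (τ : ℕ → Tile Γ Q) : Prop where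
  hu : ∀ j, U (τ j) (g j)
  he1 : ∀ j, T (e1 (τ j)) (g j) (g (j+1))
  he2 : ∀ j, T (e2 (τ j)) (g j) (g (j+1))
  hini : ∀ j < N, τ j = tileIni p0 p1 s .ini j
  hN : τ N = tileIni p0 p1 s .turn N
  hrel : ∀ j, N ≤ j → Rel M (τ j) (τ (j+1))

variable {U T}
lemma get_path {V : ℕ → A → Prop} {N : ℕ} (hF : FixSem M U T) (hC : ChSem p0 p1 s V U T N)
    (hodd : N % 2 = 1) : ∃ g τ, Path M p0 p1 s U T N g τ := by
  let P : ℕ → A × Tile Γ Q → Prop := fun n x =>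
    (n < N → V n x.1 ∧ x.2 = tileIni p0 p1 s .ini n) ∧
    (n = N → V n x.1 ∧ x.2 = tileIni p0 p1 s .turn n) ∧ U x.2 x.1 ∧ (N ≤ n → dem x.2.dat)
  let R : ℕ → A × Tile Γ Q → A × Tile Γ Q → Prop := fun n x y =>
    T (e1 x.2) x.1 y.1 ∧ T (e2 x.2) x.1 y.1 ∧ (N ≤ n → Rel M x.2 y.2)
  have hdN : dem (tileIni p0 p1 s (Nx.turn : Nx Q) N).dat := by
    simp [tileIni, hodd, dem]
  have mk : ∀ n, n ≤ N → ∀ a, V n a → ∃ x : A × Tile Γ Q, x.1 = a ∧ P n x := by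
    intro n hn a ha
    rcases Nat.lt_or_ge n N with h | h
    · exact ⟨(a, tileIni p0 p1 s .ini n), rfl, fun _ => ⟨ha, rfl⟩, fun h' => absurd h (by omega),
        hC.hu n h a ha, fun h' => absurd h (by omega)⟩
    · have : n = N := by omega
      subst this
      exact ⟨(a, tileIni p0 p1 s .turn n), rfl, fun h' => absurd h' (by omega), fun _ => ⟨ha, rfl⟩,
        hC.hN a ha, fun _ => hdN⟩
  obtain ⟨f, hf⟩ := exists_path P R (by
    obtain ⟨a, ha⟩ := hC.h0
    obtain ⟨x, _, hx⟩ := mk 0 (by omega) a ha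
    exact ⟨x, hx⟩) (by
    rintro n ⟨a, σ⟩ ⟨h1, h2, h3, h4⟩
    simp only at h1 h2 h3 h4
    rcases Nat.lt_or_ge n N with h | h
    · obtain ⟨hv, rfl⟩ := h1 h
      obtain ⟨b, t1, t2, hb⟩ := hC.ht n h a hv
      obtain ⟨x, rfl, hx⟩ := mk (n+1) (by omega) b hb
      have hT : isTurn (tileIni p0 p1 s (Nx.ini : Nx Q) n).dat = false := by
        unfold tileIni; simp only; split_ifs <;> rfl
      refine ⟨x, hx, ?_, ?_, fun h' => absurd h (by omega)⟩
      · simp only [e1, hT]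
        exact t1
      · simp only [e2, hT]
        exact t2
    · obtain ⟨b, τ', t1, t2, hr, hb⟩ := hF.ha σ a (h4 h) h3
      exact ⟨(b, τ'), ⟨fun h' => absurd h (by omega), fun h' => absurd h (by omega), hb,
        fun _ => hr.dem⟩, t1, t2, fun _ => hr⟩)
  refine ⟨fun n => (f n).1, fun n => (f n).2, ?_, ?_, ?_, ?_, ?_, ?_⟩
  · exact fun j => (hf j).1.2.2.1
  · exact fun j => (hf j).2.1
  · exact fun j => (hf j).2.2.1
  · exact fun j hj => ((hf j).1.1 hj).2
  · exact ((hf N).1.2.1 rfl).2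
  · exact fun j hj => (hf j).2.2.2 hj

def Row (L : ℕ) (C0 : AC Γ Q) (τ : ℕ → Tile Γ Q) (t : ℕ) : Prop :=
  ∀ m ≤ L + t, τ (base L t + 2*m) = rT M L C0 t (cell L t m) ∧
    τ (base L t + 2*m+1) = wT M L C0 t (cell L t m)

lemma row_zero {n : ℕ} {g : ℕ → A} {τ : ℕ → Tile Γ Q} (hp : Path M p0 p1 s U T (2*n+3) g τ) :
    Row M (n+1) (ini p0 p1 s n) τ 0 := by
  intro m hm
  have hc : cell (n+1) 0 m = m := by
    simp [cell, fs, lo, sg, dirOf]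
  rw [hc]
  simp only [base, zero_add]
  constructor
  · rw [hp.hini _ (by omega), tileIni_r M p0 p1 s n]
  · rcases Nat.lt_or_ge m (n+1) with h | h
    · rw [hp.hini _ (by omega), tileIni_w M p0 p1 s n m _ (by omega)]
      rw [if_neg (by omega)]
    · have : m = n+1 := by omega
      subst this
      have : 2*(n+1)+1 = 2*n+3 := by omega
      rw [← tileIni_w M p0 p1 s n (n+1) .turn (by omega) (by simp), this, hp.hN]

lemma row_succ {L : ℕ} {C0 : AC Γ Q} (hinv : Inv M L C0) (hF : FixSem M U T)
    (hT : ∀ k, Transitive (T k))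
    {g : ℕ → A} {τ : ℕ → Tile Γ Q} (hp : Path M p0 p1 s U T (2*L+1) g τ) (t : ℕ)
    (hR : Row M L C0 τ t) : Row M L C0 τ (t+1) ∧ ¬ Halted M (conf M C0 t) := by
  have hbase : ∀ t, 2*L+2 ≤ base L (t+1) := by
    intro t
    induction t with
    | zero => simp [base]; omega
    | succ t ih => rw [base]; omega
  have hb := hbase t
  have hbt : base L (t+1) = base L t + 2*(L+1+t) := rfl
  -- edges
  have er : ∀ j t i, τ j = rT M L C0 t i → T ((rx t i : ℤ) : ZMod 3) (g j) (g (j+1)) ∧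
      T ((wx t i : ℤ) : ZMod 3) (g j) (g (j+1)) := by
    intro j t i h
    have a := hp.he1 j
    have b := hp.he2 j
    rw [h, e1, turn_rT] at a
    rw [h, e2, turn_rT] at b
    refine ⟨a, ?_⟩
    simp only [rT] at b
    rw [col1] at b
    exact b
  have ew : ∀ j t i, τ j = wT M L C0 t i → i ≠ fs L (t+1) →
      T ((wx t i : ℤ) : ZMod 3) (g j) (g (j+1)) ∧
      T ((rx t (i + sg (dirOf t)) : ℤ) : ZMod 3) (g j) (g (j+1)) := by
    intro j t i h hi
    have a := hp.he1 j
    have b := hp.he2 j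
    rw [h, e1, turn_wT, decide_eq_false hi] at a
    rw [h, e2, turn_wT, decide_eq_false hi] at b
    refine ⟨a, ?_⟩
    simp only [wT] at b
    rw [col2] at b
    exact b
  have et : ∀ j t i, τ j = wT M L C0 t i → i = fs L (t+1) →
      T (((wx t i : ℤ) : ZMod 3) + sgz (dirOf t)) (g j) (g (j+1)) ∧
      T (((wx t i : ℤ) : ZMod 3) - sgz (dirOf t)) (g j) (g (j+1)) := by
    intro j t i h hi
    have a := hp.he1 j
    have b := hp.he2 j
    rw [h, e1, turn_wT, decide_eq_true hi, if_pos rfl] at a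
    rw [h, e2, turn_wT, decide_eq_true hi, if_pos rfl] at b
    simp only [wT] at a b
    cases dirOf t
    · simp only [sgz]
      refine ⟨?_, ?_⟩
      · simpa [sub_eq_add_neg] using b
      · simpa using a
    · simp only [sgz]
      exact ⟨by simpa using a, by simpa using b⟩
  -- r gives w
  have rw1 : ∀ m ≤ L + (t+1), τ (base L (t+1) + 2*m) = rT M L C0 (t+1) (cell L (t+1) m) →
      τ (base L (t+1) + 2*m+1) = wT M L C0 (t+1) (cell L (t+1) m) ∧
      (m ≤ L + t → cell L (t+1) m = (conf M C0 t).p → ¬ Halted M (conf M C0 t)) := by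
    intro m hm h
    have hr := hp.hrel (base L (t+1) + 2*m) (by omega)
    rw [h] at hr
    have hl := cell_last L (t+1) (L+(t+1)) rfl
    rcases Nat.lt_or_ge (L+t) m with h' | h'
    · have : m = L + (t+1) := by omega
      subst this
      rw [relB M hinv _ _ hl] at hr
      exact ⟨hr, fun h => by omega⟩
    · rw [relA] at hr
      · exact ⟨hr.2, fun _ => hr.1⟩
      · intro h
        rw [← hl] at h
        have := cell_inj _ _ _ _ h
        omega
  have key : ∀ m, m ≤ L + (t+1) → τ (base L (t+1) + 2*m) = rT M L C0 (t+1) (cell L (t+1) m) ∧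
      ∀ m', m + m' = L + t →
        T (((wx t (cell L t m') : ℤ) : ZMod 3) + sgz (dirOf t)) (g (base L t + 2*m'+1))
          (g (base L (t+1) + 2*m)) ∧
        T (((wx t (cell L t m') : ℤ) : ZMod 3) - sgz (dirOf t)) (g (base L t + 2*m'+1))
          (g (base L (t+1) + 2*m)) := by
    intro m
    induction m with
    | zero =>
      intro _
      have hl := cell_last L t (L+t) rfl
      have hw := (hR (L+t) (le_refl _)).2
      have hidx : base L t + 2*(L+t) + 1 + 1 = base L (t+1) + 2*0 := by omega
      constructor
      · have hr := hp.hrel (base L t + 2*(L+t)+1) (by omega)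
        rw [hw, relC M hinv _ _ hl, hidx] at hr
        rw [hr, hl, cell_zero]
      · intro m' hm'
        have : m' = L+t := by omega
        subst this
        have := et _ _ _ hw hl
        rw [hidx] at this
        exact this
    | succ m ih =>
      intro hm
      obtain ⟨h1, h2⟩ := ih (by omega)
      obtain ⟨m', hm'⟩ : ∃ m', m + m' = L + t := ⟨L + t - m, by omega⟩
      have h2 := h2 m' hm'
      have h3 := (rw1 m (by omega) h1).1
      have hidx : base L (t+1) + 2*m+1+1 = base L (t+1) + 2*(m+1) := by omega
      have hr := hp.hrel (base L (t+1) + 2*m+1) (by omega)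
      rw [h3, hidx] at hr
      have hopp := cell_opp L t m m' hm'
      rcases m' with _ | m'
      · rw [cell_zero] at hopp
        rw [relD _ _ _ _ _ hopp] at hr
        refine ⟨?_, fun m' hm' => by omega⟩
        rw [hr, cell_succ]
      · have n1 : cell L (t+1) m ≠ fs L t := by
          rw [hopp, ← cell_zero]
          intro h
          have := cell_inj _ _ _ _ h
          omega
        have n2 : cell L (t+1) m ≠ fs L (t+2) := by
          rw [← cell_last L (t+1) (L+(t+1)) rfl]
          intro h
          have := cell_inj _ _ _ _ h
          omega
        have hreg := cell_reg L (t+1) m (by omega)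
        rw [relE _ _ _ _ _ n1 n2] at hr
        obtain ⟨s', hs'⟩ := hr
        have hopp' := cell_opp L t (m+1) m' (by omega)
        have hsucc := cell_succ L (t+1) m
        have hw' := (hR m' (by omega)).2
        have hr' := (hR (m'+1) (by omega)).1
        have i1 : base L t + 2*m'+1+1 = base L t + 2*(m'+1) := by omega
        have ed1 := (ew _ _ _ hw' (by
          rw [← cell_last L t (L+t) rfl]
          intro h
          have := cell_inj _ _ _ _ h
          omega)).2
        rw [← cell_succ, i1] at ed1
        have ed2 := (er _ _ _ hr').1
        have ed3 := h2.2
        have ed4 := (er _ _ _ h1).2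
        have n3 : cell L (t+1) m ≠ fs L (t+1+1) := n2
        have ed5 := (ew _ _ _ h3 n3).1
        rw [hidx] at ed5
        have c1 : wx (t+1) (cell L (t+1) m) = rx t (cell L t (m'+1)) := by
          rw [hopp]
          have := geo 0 t
          simp only [rx, wx]; omega
        rw [c1] at ed4 ed5
        have c2 : ((wx t (cell L t (m'+1)) : ℤ) : ZMod 3) - sgz (dirOf t) =
            ((rx t (cell L t (m'+1)) : ℤ) : ZMod 3) := by
          rw [← col1]; ring
        rw [c2] at ed3
        have tr := hT ((rx t (cell L t (m'+1)) : ℤ) : ZMod 3)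
        have tot := tr (tr (tr (tr ed1 ed2) ed3) ed4) ed5
        rw [← hsucc] at hs'
        rw [hopp'] at hs'
        have hwr := wr_wT M L C0 t (cell L t m') s' _ _ _ hs'
        have hu1 := hp.hu (base L t + 2*m'+1)
        rw [hw'] at hu1
        have hcol : ((wT M L C0 t (cell L t m')).col + sgz (wT M L C0 t (cell L t m')).dir) =
            ((rx t (cell L t (m'+1)) : ℤ) : ZMod 3) := by
          simp only [wT]; rw [col2, cell_succ]
        obtain ⟨hs, hjump⟩ := hF.hb _ _ _ _ _ _ hwr hu1 (by rw [hcol]; exact tot)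
          (hp.hu (base L (t+1) + 2*(m+1)))
        constructor
        · rw [hs', hopp', ← hs]
          have := rT_eq M L C0 t _ hreg.1 hreg.2 n1 n2
          rw [← hsucc, hopp'] at this
          rw [this]
        · intro m'' hm''
          have : m'' = m' := by omega
          subst this
          refine ⟨?_, hjump⟩
          rw [← hcol] at tot
          exact tot
  refine ⟨fun m hm => ⟨(key m hm).1, (rw1 m hm (key m hm).1).1⟩, ?_⟩
  obtain ⟨q1, q2, _⟩ := hinv t
  obtain ⟨m', hm', hc⟩ := cell_surj L t _ q1 q2
  have hopp := cell_opp L t (L+t-m') m' (by omega)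
  exact (rw1 (L+t-m') (by omega) (key _ (by omega)).1).2 (by omega) (by rw [hopp, hc])

theorem sound {V : ℕ → A → Prop} {n : ℕ} (hF : FixSem M U T)
    (hC : ChSem p0 p1 s V U T (2*n+3)) (hT : ∀ k, Transitive (T k)) (t : ℕ) :
    ¬ Halted M (conf M (ini p0 p1 s n) t) := by
  obtain ⟨g, τ, hp⟩ := get_path M p0 p1 s hF hC (by omega)
  have hr : ∀ t, Row M (n+1) (ini p0 p1 s n) τ t := by
    intro t
    induction t with
    | zero => exact row_zero M p0 p1 s hp
    | succ t ih => exact (row_succ M p0 p1 s (inv_ini M p0 p1 s n) hF hT hp t ih).1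
  exact (row_succ M p0 p1 s (inv_ini M p0 p1 s n) hF hT hp t (hr t)).2

end sound


def fE (y : ℤ) (a : ℕ × ℤ) : ℤ × ℤ :=
  ((a.2 + 1 - y) / 3, (a.1 + 3 * ((a.2 + 1 - y) / 3) + y) / 2)

def EE (k : ZMod 3) (a b : ℕ × ℤ) : Prop := fE (k.val : ℤ) a = fE (k.val : ℤ) b

lemma EE_equiv (k : ZMod 3) : Equivalence (EE k) :=
  ⟨fun _ => rfl, fun h => h.symm, fun h h' => h.trans h'⟩

lemma EE_int (y : ℤ) (t t' : ℕ) (x x' : ℤ) : EE (y : ZMod 3) (t, x) (t', x') ↔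
    (x + 1 - y) / 3 = (x' + 1 - y) / 3 ∧
    (t + 3 * ((x + 1 - y) / 3) + y) / 2 = (t' + 3 * ((x' + 1 - y) / 3) + y) / 2 := by
  unfold EE fE
  have h : ((((y : ℤ) : ZMod 3).val : ℕ) : ℤ) = y % 3 := by
    have := ZMod.val_intCast (n := 3) y
    simpa using this
  rw [h]
  simp only [Prod.mk.injEq]
  constructor <;> rintro ⟨h1, h2⟩ <;> constructor <;> omega

section comp
variable {Γ Q : Type} [Inhabited Γ] [Inhabited Q] (M : TM0.Machine Γ Q) (L : ℕ) (C0 : AC Γ Q)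

def UU (τ : Tile Γ Q) (a : ℕ × ℤ) : Prop :=
  ∃ i, lo a.1 ≤ i ∧ i ≤ hi L a.1 ∧ ((a.2 = rx a.1 i ∧ τ = rT M L C0 a.1 i) ∨
    (a.2 = wx a.1 i ∧ τ = wT M L C0 a.1 i))

variable {L C0}
lemma comp_ha (hinv : Inv M L C0) (hnh : ∀ t, ¬ Halted M (conf M C0 t)) (τ : Tile Γ Q)
    (a : ℕ × ℤ) (hd : dem τ.dat) (hu : UU M L C0 τ a) :
    ∃ b τ', EE (e1 τ) a b ∧ EE (e2 τ) a b ∧ Rel M τ τ' ∧ UU M L C0 τ' b := by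
  obtain ⟨t, x⟩ := a
  obtain ⟨i, h1, h2, (⟨hx, rfl⟩ | ⟨hx, rfl⟩)⟩ := hu
  · simp only at h1 h2 hx
    subst hx
    rcases t with _ | t
    · exact hd.elim
    · have hg := geo L (t+1)
      refine ⟨(t+1, wx (t+1) i), wT M L C0 (t+1) i, ?_, ?_, ?_, ⟨i, h1, h2, .inr ⟨rfl, rfl⟩⟩⟩
      · rw [e1, turn_rT]
        simp only [rT, EE_int]
        simp only [rx, wx]
        simp only [Bool.false_eq_true, if_false]
        rw [EE_int]
        constructor <;> omega
      · rw [e2, turn_rT]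
        simp only [rT, Bool.false_eq_true, if_false]
        rw [col1, EE_int]
        simp only [rx, wx]
        constructor <;> omega
      · by_cases hi : i = fs L (t+2)
        · rw [relB M hinv _ _ hi]
        · rw [relA _ _ _ _ _ hi]
          exact ⟨fun _ => hnh t, rfl⟩
  · simp only at h1 h2 hx
    subst hx
    have hg := geo L t
    by_cases hi : i = fs L (t+1)
    · refine ⟨(t+1, rx (t+1) i), rT M L C0 (t+1) i, ?_, ?_, ?_, ⟨i, ?_, ?_, .inl ⟨rfl, rfl⟩⟩⟩
      · rw [e1, turn_wT, decide_eq_true hi, if_pos rfl]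
        have : (wT M L C0 t i).col + 1 = ((wx t i + 1 : ℤ) : ZMod 3) := by simp [wT]
        rw [this, EE_int, ← col3]
        refine ⟨rfl, ?_⟩
        have hw : (wx t i + t) % 2 = 1 := by simp only [wx]; omega
        generalize wx t i = y at *
        push_cast
        clear hg
        omega
      · rw [e2, turn_wT, decide_eq_true hi, if_pos rfl]
        have : (wT M L C0 t i).col - 1 = ((wx t i - 1 : ℤ) : ZMod 3) := by simp [wT]
        rw [this, EE_int, ← col3]
        refine ⟨rfl, ?_⟩
        have hw : (wx t i + t) % 2 = 1 := by simp only [wx]; omega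
        generalize wx t i = y at *
        push_cast
        clear hg
        omega
      · rw [relC M hinv _ _ hi]
      · simp only; omega
      · simp only; omega
    · rcases t with _ | t
      · exfalso
        have hh : ¬ i = fs L 1 := hi
        simp [wT, wD, hh, dem] at hd
      · have hg' := geo L t
        have hh : ¬ i = fs L (t+2) := hi
        refine ⟨(t+1, rx (t+1) (i + sg (dirOf (t+1)))), rT M L C0 (t+1) (i + sg (dirOf (t+1))),
          ?_, ?_, ?_, ⟨i + sg (dirOf (t+1)), ?_, ?_, .inl ⟨rfl, rfl⟩⟩⟩
        · rw [e1, turn_wT, decide_eq_false hi]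
          simp only [wT, Bool.false_eq_true, if_false]
          rw [EE_int]
          simp only [rx, wx]
          constructor <;> omega
        · rw [e2, turn_wT, decide_eq_false hi]
          simp only [wT, Bool.false_eq_true, if_false]
          rw [col2, EE_int]
          simp only [rx, wx]
          constructor <;> omega
        · by_cases h0 : i = fs L t
          · rw [relD _ _ _ _ _ h0]
          · rw [relE _ _ _ _ _ h0 hh]
            exact ⟨_, rT_eq M L C0 t i h1 h2 h0 hh⟩
        · simp only; omega
        · simp only; omega

lemma comp_hb (τ τ' : Tile Γ Q) (s s' : Sym Γ Q)
    (a b : ℕ × ℤ) (hw : WR τ τ' s s') (hu : UU M L C0 τ a)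
    (he : EE (τ.col + sgz τ.dir) a b) (hu' : UU M L C0 τ' b) :
    s = s' ∧ EE (τ.col - sgz τ.dir) a b := by
  obtain ⟨t, x⟩ := a
  obtain ⟨t', x'⟩ := b
  obtain ⟨w1, w2, ⟨nx, w3⟩, c, f, w4⟩ := hw
  obtain ⟨i, h1, h2, (⟨hx, rfl⟩ | ⟨hx, rfl⟩)⟩ := hu
  · exfalso
    cases t <;> simp [rT, rD] at w3
  obtain ⟨i', h1', h2', (⟨hx', rfl⟩ | ⟨hx', rfl⟩)⟩ := hu'
  swap
  · exfalso
    cases t' <;> simp [wT, wD] at w4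
  simp only at h1 h2 hx h1' h2' hx'
  subst hx hx'
  rcases t' with _ | t'
  · simp [rT, rD] at w4
  have hg := geo L t
  have hg' := geo L t'
  have hs : s = symAt M L C0 t i := by
    cases t <;> (simp only [wT, wD, Dat.w.injEq] at w3; exact w3.1.symm)
  have hs' : s' = symAt M L C0 t' i' := by
    simp only [rT, rD, Dat.r.injEq] at w4
    have := w4.1
    split_ifs at this
    exact (Option.some.inj this).symm
  simp only [rT, wT] at w1 w2
  rw [ZMod.intCast_eq_intCast_iff] at w1
  unfold Int.ModEq at w1
  have hpar : t' % 2 = t % 2 := by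
    rcases hg with hg | hg <;> rcases hg' with hg' | hg' <;>
      first
      | omega
      | (exfalso; rw [hg.2.1, hg'.2.2.1] at w2; simp at w2)
  have e1' : (wT M L C0 t i).col + sgz (wT M L C0 t i).dir =
      ((wx t i + sg (dirOf t) : ℤ) : ZMod 3) := by simp [wT, sgz_eq]
  have e2' : (wT M L C0 t i).col - sgz (wT M L C0 t i).dir =
      ((wx t i - sg (dirOf t) : ℤ) : ZMod 3) := by simp [wT, sgz_eq]
  rw [e1', EE_int] at he
  rw [e2', EE_int]
  rw [← col3] at *
  simp only [wx] at *
  push_cast at *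
  obtain ⟨he1, he2⟩ := he
  have hii : i = i' := by omega
  subst hii
  have htt : t = t' := by omega
  subst htt
  refine ⟨by rw [hs, hs'], rfl, ?_⟩
  omega

theorem complete [Finite Γ] [Finite Q] (p0 p1 s : Γ) (n : ℕ)
    (hnh : ∀ t, ¬ Halted M (conf M (ini p0 p1 s n) t)) : SatisfiableEquiv (phi M p0 p1 s n) := by
  let C0 : AC Γ Q := ini p0 p1 s n
  have hinv : Inv M (n+1) C0 := inv_ini M p0 p1 s n
  let S : Str (ℕ × ℤ) := ⟨fun p a => (∃ τ : Tile Γ Q, p = code τ ∧ UU M (n+1) C0 τ a) ∨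
    (∃ j ≤ 2*n+3, p = KK Γ Q + j ∧ a = (0, (j:ℤ))), EE⟩
  refine ⟨ℕ × ℤ, ⟨(0, 0)⟩, S, EE_equiv, ?_⟩
  rw [sat_phi]
  have hU : (fun τ : Tile Γ Q => S.U (code τ)) = UU M (n+1) C0 := by
    funext τ a
    apply propext
    constructor
    · rintro (⟨τ', h, h'⟩ | ⟨j, _, h, _⟩)
      · rw [code_inj h]; exact h'
      · have := code_lt τ; omega
    · intro h
      exact .inl ⟨τ, rfl, h⟩
  have hV : (fun j => S.U (KK Γ Q + j)) = fun j a => j ≤ 2*n+3 ∧ a = (0, (j:ℤ)) := by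
    funext j a
    apply propext
    constructor
    · rintro (⟨τ', h, h'⟩ | ⟨j', hj, h, h'⟩)
      · have := code_lt τ'; omega
      · have : j = j' := by omega
        subst this; exact ⟨hj, h'⟩
    · rintro ⟨h, h'⟩
      exact .inr ⟨j, h, rfl, h'⟩
  rw [hU, hV]
  have hl : lo 0 = 0 := by simp [lo]
  have hh : hi (n+1) 0 = n+1 := by simp [hi]
  refine ⟨⟨fun τ a => comp_ha M hinv hnh τ a, comp_hb M⟩, ⟨(0, 0), by omega, rfl⟩, ?_, ?_, ?_⟩
  · rintro j hj a ⟨_, rfl⟩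
    rcases Nat.even_or_odd' j with ⟨m, rfl | rfl⟩
    · refine ⟨m, by simp [hl], by simp [hh]; omega, .inl ⟨by simp [rx], ?_⟩⟩
      exact tileIni_r M p0 p1 s n m _
    · refine ⟨m, by simp [hl], by simp [hh]; omega, .inr ⟨by simp [wx], ?_⟩⟩
      exact tileIni_w M p0 p1 s n m _ (by omega) (by rw [if_neg (by omega)])
  · rintro j hj a ⟨_, rfl⟩
    refine ⟨(0, ((j+1 : ℕ) : ℤ)), ?_, ?_, by omega, rfl⟩
    · have : (j : ZMod 3) = ((j : ℤ) : ZMod 3) := by simp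
      rw [this]
      change EE _ _ _
      rw [EE_int]; constructor <;> omega
    · have : (j : ZMod 3) + 1 = ((j + 1 : ℤ) : ZMod 3) := by simp
      rw [this]
      change EE _ _ _
      rw [EE_int]; constructor <;> omega
  · rintro a ⟨_, rfl⟩
    have e : 2*n+3 = 2*(n+1)+1 := by omega
    refine ⟨((n+1 : ℕ):ℤ), by simp [hl]; omega, by simp [hh], .inr ⟨by simp [wx]; omega, ?_⟩⟩
    rw [e]
    exact tileIni_w M p0 p1 s n (n+1) _ (by omega) (by simp)

end comp

theorem main_red {Γ Q : Type} [Inhabited Γ] [Inhabited Q] [Finite Γ] [Finite Q]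
    (M : TM0.Machine Γ Q) (p0 p1 s : Γ) (P : F 0 → Prop)
    (h1 : ∀ φ, SatisfiableEquiv φ → P φ) (h2 : ∀ φ, P φ → Satisfiable φ)
    (f : ℕ → Bool) (hf : Computable f) (hd : ∀ φ : F 0, Guarded φ → (f (encode φ) = true ↔ P φ)) :
    ComputablePred (fun n : ℕ => (TM0.eval M (p0 :: p1 :: List.replicate n s)).Dom) := by
  have key : ∀ n, f (encode (phi M p0 p1 s n)) = true ↔
      ¬ (TM0.eval M (p0 :: p1 :: List.replicate n s)).Dom := by
    intro n
    rw [hd _ (g_phi M p0 p1 s n), ← nonhalt_iff M _ _ (ini_sim p0 p1 s n)]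
    constructor
    · intro h
      obtain ⟨A, _, S, hT, hS⟩ := h2 _ h
      rw [sat_phi] at hS
      exact sound M p0 p1 s hS.1 hS.2 hT
    · intro h
      exact h1 _ (complete M p0 p1 s n h)
  have hc : Computable (fun n => f (encode (phi M p0 p1 s n))) :=
    hf.comp (primrec_phi M p0 p1 s).to_comp
  rw [ComputablePred.computable_iff]
  refine ⟨fun n => !(f (encode (phi M p0 p1 s n))), Primrec.not.to_comp.comp hc, ?_⟩
  funext n
  apply propext
  have := key n
  cases h : f (encode (phi M p0 p1 s n)) <;> simp_all

theorem equiv_sat (φ : F 0) (h : SatisfiableEquiv φ) : Satisfiable φ := by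
  obtain ⟨A, hA, S, hT, hS⟩ := h
  exact ⟨A, hA, S, fun k _ _ _ h h' => (hT k).trans h h', hS⟩

end helpers

/-- Corollary of Theorem 7.  The satisfiability problem for the
intersection of the fluted fragment with the two-variable guarded fragment is
undecidable in the presence of three distinguished transitive relations, and likewise
when the three distinguished relations are required to be equivalence relations. -/
theorem guarded_fluted_threeTrans_undecidable :
    (¬ ∃ f : ℕ → Bool, Computable f ∧
      ∀ φ : F 0, Guarded φ → (f (encode φ) = true ↔ Satisfiable φ)) ∧
    (¬ ∃ f : ℕ → Bool, Computable f ∧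
      ∀ φ : F 0, Guarded φ → (f (encode φ) = true ↔ SatisfiableEquiv φ)) := by
  obtain ⟨Γ, Q, _, _, _, _, M, p0, p1, s, hM⟩ := source
  constructor
  · rintro ⟨f, hf, hd⟩
    exact hM (main_red M p0 p1 s Satisfiable equiv_sat (fun _ h => h) f hf hd)
  · rintro ⟨f, hf, hd⟩
    exact hM (main_red M p0 p1 s SatisfiableEquiv (fun _ h => h) equiv_sat f hf hd)

end FlutedThreeTrans
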